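/- arXiv:2605.22173 — 6 statements merged into one kernel-verified Lean document; each statement's English description precedes it below -/
import Mathlib

section
/- Let q be a prime power, F a finite field with q elements, d ≥ 3 an integer, S ⊆ {1,…,d−1} with |S| ≥ 2, and let s be a face of the projected flags complex B(d,S,q) with |S| − |s| ≥ 2 (s possibly empty). The vertices of the link of s are the subspaces W with dim(W) ∈ S, W ∉ s and s ∪ {W} a chain. Let π₀ be the distribution obtained by sampling a uniformly random maximal face T of B(d,S,q) with s ⊆ T and then a uniformly random element of T∖s, and let (U,V) be obtained by sampling such a T and then a uniformly random ordered pair of distinct elements of T∖s. Then every f from the vertices of the link of s to ℝ with E_{U∼π₀}[f(U)] = 0 satisfies E[f(U)·f(V)] ≤ (2/((|S|−|s|−1)·(√q−1)))·E_{U∼π₀}[f(U)²]. In particular (taking s = ∅), the underlying weighted graph of B(d,S,q) has normalized second eigenvalue at most 2/((|S|−1)·(√q−1)). -/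
open Finset
open scoped Classical

noncomputable instance (F : Type) [Field F] [Fintype F] (n : ℕ) :
    Fintype (Submodule F (Fin n → F)) :=
  Fintype.ofInjective (fun W => (W : Set (Fin n → F)))
    fun _ _ h => SetLike.coe_injective h

/-- A face of the projected flags complex `B(n,S,q)`: a finite chain of subspaces of `F^n`
whose dimensions all lie in `S`. -/
def IsFlagFace (F : Type) [Field F] [Fintype F] (n : ℕ) (S : Finset ℕ)
    (s : Finset (Submodule F (Fin n → F))) : Prop :=
  IsChain (· ≤ ·) (s : Set (Submodule F (Fin n → F))) ∧
    ∀ W ∈ s, Module.finrank F W ∈ S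

/-- A maximal face of `B(n,S,q)`: a chain containing one subspace of each dimension in `S`. -/
def IsMaxFlagFace (F : Type) [Field F] [Fintype F] (n : ℕ) (S : Finset ℕ)
    (T : Finset (Submodule F (Fin n → F))) : Prop :=
  IsFlagFace F n S T ∧ ∀ i ∈ S, ∃ W ∈ T, Module.finrank F W = i

/-- The maximal faces of `B(n,S,q)` containing a given face `s`. -/
noncomputable def maxFacesAbove (F : Type) [Field F] [Fintype F] (n : ℕ) (S : Finset ℕ)
    (s : Finset (Submodule F (Fin n → F))) : Finset (Finset (Submodule F (Fin n → F))) :=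
  Finset.univ.filter fun T => IsMaxFlagFace F n S T ∧ s ⊆ T

/-- `E_{U ∼ π₀}[f(U)]` where `π₀` samples a uniform maximal face `T ⊇ s` and then a uniform
element of `T \ s`. -/
noncomputable def linkVertExp (F : Type) [Field F] [Fintype F] (n : ℕ) (S : Finset ℕ)
    (s : Finset (Submodule F (Fin n → F))) (f : Submodule F (Fin n → F) → ℝ) : ℝ :=
  (∑ T ∈ maxFacesAbove F n S s, (∑ U ∈ T \ s, f U) / ((T \ s).card : ℝ)) /
    ((maxFacesAbove F n S s).card : ℝ)

/-- `E[f(U)·g(V)]` where one samples a uniform maximal face `T ⊇ s` and then a uniformly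
random ordered pair of distinct elements `(U,V)` of `T \ s`. -/
noncomputable def linkPairExp (F : Type) [Field F] [Fintype F] (n : ℕ) (S : Finset ℕ)
    (s : Finset (Submodule F (Fin n → F))) (f g : Submodule F (Fin n → F) → ℝ) : ℝ :=
  (∑ T ∈ maxFacesAbove F n S s,
      (∑ U ∈ T \ s, ∑ V ∈ (T \ s).erase U, f U * g V) /
        (((T \ s).card : ℝ) * (((T \ s).card : ℝ) - 1))) /
    ((maxFacesAbove F n S s).card : ℝ)


namespace FlagAux

lemma up_count_nat {F : Type} [Field F] [Fintype F] {V : Type} [AddCommGroup V] [Module F V]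
    [Finite V] (W B : Submodule F V) (h : W ≤ B) :
    {W' : Submodule F V | W ≤ W' ∧ W' ≤ B ∧ Module.finrank F W' = Module.finrank F W + 1}.ncard *
      (Fintype.card F ^ (Module.finrank F W + 1) - Fintype.card F ^ (Module.finrank F W)) =
      Fintype.card F ^ (Module.finrank F B) - Fintype.card F ^ (Module.finrank F W) := by
  have hfin : Finite (Submodule F V) :=
    Finite.of_injective (fun W => (W : Set V)) SetLike.coe_injective
  let _ := Fintype.ofFinite V
  let _ := Fintype.ofFinite (Submodule F V)
  have hcard : ∀ U U' : Submodule F V, U ≤ U' →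
      (univ.filter (fun v : V => v ∈ U' ∧ v ∉ U)).card =
        Fintype.card F ^ (Module.finrank F U') - Fintype.card F ^ (Module.finrank F U) := by
    intro U U' hU
    have h1 : ∀ Z : Submodule F V, (univ.filter (fun v : V => v ∈ Z)).card =
        Fintype.card F ^ (Module.finrank F Z) := by
      intro Z
      rw [← Module.card_eq_pow_finrank (K := F) (V := Z), Fintype.card_subtype]
    rw [← h1, ← h1, ← Finset.card_sdiff_of_subset]
    · congr 1
      ext v
      simp
    · intro v hv
      simp only [mem_filter, mem_univ, true_and] at hv ⊢
      exact hU hv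
  have hset : {W' : Submodule F V | W ≤ W' ∧ W' ≤ B ∧
      Module.finrank F W' = Module.finrank F W + 1} =
      ((univ.filter fun W' : Submodule F V => W ≤ W' ∧ W' ≤ B ∧
      Module.finrank F W' = Module.finrank F W + 1 : Finset _) : Set _) := by
    ext; simp
  rw [hset, Set.ncard_coe_finset, ← hcard W B h]
  rw [Finset.card_eq_sum_card_fiberwise (f := fun v : V => W ⊔ Submodule.span F {v})
    (t := univ.filter fun W' : Submodule F V => W ≤ W' ∧ W' ≤ B ∧
      Module.finrank F W' = Module.finrank F W + 1)]
  · rw [Finset.sum_const_nat]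
    intro W' hW'
    simp only [mem_filter, mem_univ, true_and] at hW'
    obtain ⟨h1, h2, h3⟩ := hW'
    rw [← h3, ← hcard W W' h1]
    congr 1
    ext v
    simp only [mem_filter, mem_univ, true_and]
    constructor
    · rintro ⟨⟨hB, hW⟩, rfl⟩
      exact ⟨(le_sup_right : _ ≤ W ⊔ Submodule.span F {v}) (Submodule.mem_span_singleton_self v), hW⟩
    · rintro ⟨hv, hW⟩
      refine ⟨⟨h2 hv, hW⟩, ?_⟩
      have hle : W ⊔ Submodule.span F {v} ≤ W' :=
        sup_le h1 ((Submodule.span_singleton_le_iff_mem _ _).2 hv)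
      apply Submodule.eq_of_le_of_finrank_le hle
      rw [h3]
      apply Nat.succ_le_of_lt
      apply Submodule.finrank_lt_finrank_of_lt
      refine lt_of_le_of_ne le_sup_left ?_
      intro he
      apply hW
      rw [he]
      exact (le_sup_right : _ ≤ W ⊔ Submodule.span F {v}) (Submodule.mem_span_singleton_self v)
  · intro v hv
    simp only [coe_filter, mem_univ, true_and, Set.mem_ofPred_eq] at hv ⊢
    obtain ⟨hB, hW⟩ := hv
    refine ⟨le_sup_left, sup_le h ((Submodule.span_singleton_le_iff_mem _ _).2 hB), ?_⟩
    apply le_antisymm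
    · refine (Submodule.finrank_add_le_finrank_add_finrank _ _).trans ?_
      have hv0 : v ≠ 0 := fun h0 => hW (h0 ▸ W.zero_mem)
      have := finrank_span_singleton (K := F) hv0
      omega
    · apply Nat.succ_le_of_lt
      apply Submodule.finrank_lt_finrank_of_lt
      refine lt_of_le_of_ne le_sup_left ?_
      intro he
      apply hW
      rw [he]
      exact (le_sup_right : _ ≤ W ⊔ Submodule.span F {v}) (Submodule.mem_span_singleton_self v)

/-- The `q`-bracket `[n]`. -/
noncomputable def br (q n : ℕ) : ℝ := ((q : ℝ) ^ n - 1) / ((q : ℝ) - 1)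

lemma up_count {F : Type} [Field F] [Fintype F] {V : Type} [AddCommGroup V] [Module F V]
    [Finite V] (W B : Submodule F V) (h : W ≤ B) :
    ({W' : Submodule F V | W ≤ W' ∧ W' ≤ B ∧
      Module.finrank F W' = Module.finrank F W + 1}.ncard : ℝ) =
      br (Fintype.card F) (Module.finrank F B - Module.finrank F W) := by
  have h0 := up_count_nat W B h
  have hq : 1 < Fintype.card F := Fintype.one_lt_card
  have hle := Submodule.finrank_mono h
  set w := Module.finrank F W
  obtain ⟨m, hm⟩ := Nat.exists_eq_add_of_le hle
  rw [hm] at h0 ⊢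
  have h1 := congrArg (Nat.cast : ℕ → ℝ) h0
  rw [Nat.cast_mul, Nat.cast_sub (Nat.pow_le_pow_right (by omega) (by omega)),
    Nat.cast_sub (Nat.pow_le_pow_right (by omega) (by omega))] at h1
  have hq' : (1 : ℝ) < Fintype.card F := by exact_mod_cast hq
  have hp : (0 : ℝ) < (Fintype.card F : ℝ) ^ w := by positivity
  unfold br
  rw [eq_div_iff (by linarith), Nat.add_sub_cancel_left]
  apply mul_left_cancel₀ hp.ne'
  push_cast at h1
  rw [pow_add, pow_add] at h1
  linarith

lemma down_count {F : Type} [Field F] [Fintype F] {V : Type} [AddCommGroup V] [Module F V]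
    [Finite V] (A W : Submodule F V) (h : A ≤ W) :
    ({W' : Submodule F V | A ≤ W' ∧ W' ≤ W ∧
      Module.finrank F W' + 1 = Module.finrank F W}.ncard : ℝ) =
      br (Fintype.card F) (Module.finrank F W - Module.finrank F A) := by
  have hfd : FiniteDimensional F V := Module.Finite.of_finite
  have hD : Finite (Module.Dual F V) := Module.finite_of_finite F
  have hann : ∀ U : Submodule F V,
      Module.finrank F U + Module.finrank F U.dualAnnihilator = Module.finrank F V :=
    fun U => Subspace.finrank_add_finrank_dualAnnihilator_eq U
  have hmono : ∀ {U U' : Submodule F V}, U.dualAnnihilator ≤ U'.dualAnnihilator ↔ U' ≤ U :=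
    fun {U U'} => Subspace.dualAnnihilator_le_dualAnnihilator_iff
  have key := up_count W.dualAnnihilator A.dualAnnihilator (hmono.2 h)
  have e : Module.finrank F A.dualAnnihilator - Module.finrank F W.dualAnnihilator =
      Module.finrank F W - Module.finrank F A := by
    have := hann A; have := hann W
    omega
  rw [e] at key
  rw [← key]
  congr 1
  rw [← Set.ncard_image_of_injective _ (f := fun U : Submodule F V => U.dualAnnihilator)]
  · congr 1
    ext Z
    simp only [Set.mem_image, Set.mem_ofPred_eq]
    constructor
    · rintro ⟨U, ⟨h1, h2, h3⟩, rfl⟩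
      refine ⟨hmono.2 h2, hmono.2 h1, ?_⟩
      have := hann U; have := hann W
      omega
    · rintro ⟨h1, h2, h3⟩
      refine ⟨Z.dualCoannihilator, ?_⟩
      have hZ : Z.dualCoannihilator.dualAnnihilator = Z :=
        Subspace.dualCoannihilator_dualAnnihilator_eq
      refine ⟨⟨?_, ?_, ?_⟩, hZ⟩
      · rw [← hmono, hZ]; exact h2
      · rw [← hmono, hZ]; exact h1
      · have h4 := hann Z.dualCoannihilator
        have h5 := hann W
        rw [hZ] at h4
        omega
  · intro U U' hU
    exact le_antisymm (hmono.1 (le_of_eq hU.symm)) (hmono.1 (le_of_eq hU))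

end FlagAux

namespace FlagAux

lemma sq_sum_count {α β : Type*} (X : Finset α) (Y : Finset β) (R : α → β → Prop) (f : α → ℝ) :
    ∑ y ∈ Y, (∑ x ∈ X.filter (fun x => R x y), f x) ^ 2 =
      ∑ x₁ ∈ X, ∑ x₂ ∈ X, f x₁ * f x₂ * ((Y.filter fun y => R x₁ y ∧ R x₂ y).card : ℝ) := by
  have h1 : ∀ y ∈ Y, (∑ x ∈ X.filter (fun x => R x y), f x) ^ 2 =
      ∑ x₁ ∈ X, ∑ x₂ ∈ X, f x₁ * f x₂ * (if R x₁ y ∧ R x₂ y then 1 else 0) := by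
    intro y _
    rw [sq, Finset.sum_filter, Finset.sum_mul_sum]
    refine Finset.sum_congr rfl fun x₁ _ => Finset.sum_congr rfl fun x₂ _ => ?_
    by_cases a : R x₁ y <;> by_cases b : R x₂ y <;> simp [a, b]
  rw [Finset.sum_congr rfl h1, Finset.sum_comm]
  refine Finset.sum_congr rfl fun x₁ _ => ?_
  rw [Finset.sum_comm]
  refine Finset.sum_congr rfl fun x₂ _ => ?_
  rw [← Finset.mul_sum]
  simp

lemma sum_adj {α β : Type*} (X : Finset α) (Y : Finset β) (R : α → β → Prop) (f : α → ℝ)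
    (g : β → ℝ) :
    ∑ y ∈ Y, g y * (∑ x ∈ X.filter (fun x => R x y), f x) =
      ∑ x ∈ X, f x * (∑ y ∈ Y.filter (fun y => R x y), g y) := by
  simp only [Finset.mul_sum, Finset.sum_filter]
  rw [Finset.sum_comm]
  refine Finset.sum_congr rfl fun x _ => Finset.sum_congr rfl fun y _ => ?_
  by_cases a : R x y <;> simp [a, mul_comm]

lemma sum_op_const {α β : Type*} (X : Finset α) (Y : Finset β) (R : α → β → Prop) (f : α → ℝ)
    (c : ℝ) (hc : ∀ x ∈ X, ((Y.filter fun y => R x y).card : ℝ) = c) :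
    ∑ y ∈ Y, (∑ x ∈ X.filter (fun x => R x y), f x) = c * ∑ x ∈ X, f x := by
  have := sum_adj X Y R f (fun _ => 1)
  simp only [one_mul] at this
  rw [this, Finset.mul_sum]
  refine Finset.sum_congr rfl fun x hx => ?_
  rw [← hc x hx]
  simp [mul_comm]

lemma sum_op_const' {α β : Type*} (X : Finset α) (Y : Finset β) (R : α → β → Prop) (f : α → ℝ) :
    ∑ y ∈ Y, (∑ x ∈ X.filter (fun x => R x y), f x) =
      ∑ x ∈ X, f x * ((Y.filter fun y => R x y).card : ℝ) := by
  have := sum_adj X Y R f (fun _ => 1)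
  simp only [one_mul] at this
  rw [this]
  simp

/-- Adjoint operators have the same norm (on mean-zero functions). -/
lemma adj_bound {α β : Type*} (X : Finset α) (Y : Finset β) (R : α → β → Prop)
    (f : β → ℝ) (μ : ℝ) (hμ : 0 ≤ μ)
    (hU : ∑ y ∈ Y, (∑ x ∈ X.filter (fun x => R x y), ∑ z ∈ Y.filter (fun z => R x z), f z) ^ 2 ≤
      μ * ∑ x ∈ X, (∑ z ∈ Y.filter (fun z => R x z), f z) ^ 2) :
    ∑ x ∈ X, (∑ z ∈ Y.filter (fun z => R x z), f z) ^ 2 ≤ μ * ∑ y ∈ Y, f y ^ 2 := by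
  set h : α → ℝ := fun x => ∑ z ∈ Y.filter (fun z => R x z), f z with hh
  set n := ∑ x ∈ X, h x ^ 2 with hn
  have hn0 : 0 ≤ n := Finset.sum_nonneg fun _ _ => sq_nonneg _
  have e : n = ∑ y ∈ Y, f y * (∑ x ∈ X.filter (fun x => R x y), h x) := by
    rw [sum_adj X Y R h f]
    refine Finset.sum_congr rfl fun x _ => ?_
    rw [sq]
  have cs := Finset.sum_mul_sq_le_sq_mul_sq Y f (fun y => ∑ x ∈ X.filter (fun x => R x y), h x)
  rw [← e] at cs
  have hf0 : 0 ≤ ∑ y ∈ Y, f y ^ 2 := Finset.sum_nonneg fun _ _ => sq_nonneg _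
  have : n ^ 2 ≤ (∑ y ∈ Y, f y ^ 2) * (μ * n) := cs.trans (mul_le_mul_of_nonneg_left hU hf0)
  change n ≤ _
  rcases hn0.eq_or_lt with h0 | h0
  · rw [← h0]; positivity
  · nlinarith

variable {F : Type} [Field F] [Fintype F] {d : ℕ}

/-- Subspaces of dimension `k` in the interval `[A, B]`. -/
noncomputable def lev (A B : Submodule F (Fin d → F)) (k : ℕ) :
    Finset (Submodule F (Fin d → F)) :=
  univ.filter fun W => A ≤ W ∧ W ≤ B ∧ Module.finrank F W = k

lemma mem_lev {A B W : Submodule F (Fin d → F)} {k : ℕ} :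
    W ∈ lev A B k ↔ A ≤ W ∧ W ≤ B ∧ Module.finrank F W = k := by
  simp [lev]

lemma up_card {A B W : Submodule F (Fin d → F)} {k : ℕ} (hW : W ∈ lev A B k) :
    (((lev A B (k + 1)).filter fun W' => W ≤ W').card : ℝ) =
      br (Fintype.card F) (Module.finrank F B - k) := by
  obtain ⟨h1, h2, rfl⟩ := mem_lev.1 hW
  rw [← up_count W B h2, ← Set.ncard_coe_finset]
  congr 2
  ext Z
  simp only [coe_filter, mem_lev, Set.mem_ofPred_eq]
  constructor
  · rintro ⟨⟨a, b, c⟩, e⟩; exact ⟨e, b, c⟩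
  · rintro ⟨a, b, c⟩; exact ⟨⟨h1.trans a, b, c⟩, a⟩

lemma down_card {A B W : Submodule F (Fin d → F)} {k : ℕ} (hW : W ∈ lev A B (k + 1)) :
    (((lev A B k).filter fun W' => W' ≤ W).card : ℝ) =
      br (Fintype.card F) (k + 1 - Module.finrank F A) := by
  obtain ⟨h1, h2, h3⟩ := mem_lev.1 hW
  rw [← h3, ← down_count A W h1, ← Set.ncard_coe_finset]
  congr 2
  ext Z
  simp only [coe_filter, mem_lev, Set.mem_ofPred_eq, h3]
  constructor
  · rintro ⟨⟨a, b, c⟩, e⟩; exact ⟨a, e, by omega⟩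
  · rintro ⟨a, b, c⟩; exact ⟨⟨a, b.trans h2, by omega⟩, b⟩

lemma updown_card {A B W₁ W₂ : Submodule F (Fin d → F)} {k : ℕ} (h₁ : W₁ ∈ lev A B (k + 1))
    (h₂ : W₂ ∈ lev A B (k + 1)) (hne : W₁ ≠ W₂) :
    ((lev A B (k + 2)).filter fun W' => W₁ ≤ W' ∧ W₂ ≤ W').card =
      ((lev A B k).filter fun W' => W' ≤ W₁ ∧ W' ≤ W₂).card := by
  obtain ⟨a1, b1, c1⟩ := mem_lev.1 h₁
  obtain ⟨a2, b2, c2⟩ := mem_lev.1 h₂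
  have hmod := Submodule.finrank_sup_add_finrank_inf_eq W₁ W₂
  have hlt1 : Module.finrank F W₁ < Module.finrank F ↥(W₁ ⊔ W₂) := by
    apply Submodule.finrank_lt_finrank_of_lt
    refine lt_of_le_of_ne le_sup_left fun h => hne ?_
    have : W₂ ≤ W₁ := by rw [h]; exact le_sup_right
    exact (Submodule.eq_of_le_of_finrank_eq this (by omega)).symm
  have e1 : ∀ Z, Z ∈ ((lev A B (k + 2)).filter fun W' => W₁ ≤ W' ∧ W₂ ≤ W') ↔
      Z = W₁ ⊔ W₂ ∧ Module.finrank F ↥(W₁ ⊔ W₂) = k + 2 := by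
    intro Z
    simp only [mem_filter, mem_lev]
    constructor
    · rintro ⟨⟨h1, h2, h3⟩, h4, h5⟩
      have hle : W₁ ⊔ W₂ ≤ Z := sup_le h4 h5
      have := Submodule.finrank_mono hle
      have he : Module.finrank F ↥(W₁ ⊔ W₂) = k + 2 := by omega
      exact ⟨(Submodule.eq_of_le_of_finrank_eq hle (by omega)).symm, he⟩
    · rintro ⟨rfl, h⟩
      exact ⟨⟨a1.trans le_sup_left, sup_le b1 b2, h⟩, le_sup_left, le_sup_right⟩
  have e2 : ∀ Z, Z ∈ ((lev A B k).filter fun W' => W' ≤ W₁ ∧ W' ≤ W₂) ↔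
      Z = W₁ ⊓ W₂ ∧ Module.finrank F ↥(W₁ ⊔ W₂) = k + 2 := by
    intro Z
    simp only [mem_filter, mem_lev]
    constructor
    · rintro ⟨⟨h1, h2, h3⟩, h4, h5⟩
      have hle : Z ≤ W₁ ⊓ W₂ := le_inf h4 h5
      have := Submodule.finrank_mono hle
      have he : Module.finrank F ↥(W₁ ⊔ W₂) = k + 2 := by omega
      exact ⟨Submodule.eq_of_le_of_finrank_eq hle (by omega), he⟩
    · rintro ⟨rfl, h⟩
      exact ⟨⟨le_inf a1 a2, inf_le_left.trans b1, by omega⟩, inf_le_left, inf_le_right⟩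
  by_cases h : Module.finrank F ↥(W₁ ⊔ W₂) = k + 2
  · have f1 : ((lev A B (k + 2)).filter fun W' => W₁ ≤ W' ∧ W₂ ≤ W') = {W₁ ⊔ W₂} := by
      ext Z; rw [e1]; simp [h]
    have f2 : ((lev A B k).filter fun W' => W' ≤ W₁ ∧ W' ≤ W₂) = {W₁ ⊓ W₂} := by
      ext Z; rw [e2]; simp [h]
    rw [f1, f2]; simp
  · have f1 : ((lev A B (k + 2)).filter fun W' => W₁ ≤ W' ∧ W₂ ≤ W') = ∅ := by
      ext Z; rw [e1]; simp [h]
    have f2 : ((lev A B k).filter fun W' => W' ≤ W₁ ∧ W' ≤ W₂) = ∅ := by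
      ext Z; rw [e2]; simp [h]
    rw [f1, f2]

lemma br_nonneg {q : ℕ} (hq : 1 < q) (n : ℕ) : 0 ≤ br q n := by
  have hq' : (1 : ℝ) < q := by exact_mod_cast hq
  exact div_nonneg (sub_nonneg.2 (one_le_pow₀ hq'.le)) (by linarith)

lemma br_succ {q : ℕ} (hq : 1 < q) (n : ℕ) : br q (n + 1) = q * br q n + 1 := by
  have hq' : (1 : ℝ) < q := by exact_mod_cast hq
  have : (q : ℝ) - 1 ≠ 0 := by linarith
  unfold br
  field_simp
  ring

lemma br_zero {q : ℕ} : br q 0 = 0 := by simp [br]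

lemma br_pos {q : ℕ} (hq : 1 < q) (n : ℕ) : 0 < br q (n + 1) := by
  rw [br_succ hq]
  have := br_nonneg hq n
  positivity

lemma interval_bound (A B : Submodule F (Fin d → F)) (l m : ℕ) 
    (hm : Module.finrank F A + l + 1 + m = Module.finrank F B)
    (f : Submodule F (Fin d → F) → ℝ)
    (hf : ∑ W ∈ lev A B (Module.finrank F A + l), f W = 0) :
    ∑ W' ∈ lev A B (Module.finrank F A + l + 1),
      (∑ W ∈ (lev A B (Module.finrank F A + l)).filter (fun W => W ≤ W'), f W) ^ 2 ≤
      (Fintype.card F : ℝ) * br (Fintype.card F) l * br (Fintype.card F) m *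
        ∑ W ∈ lev A B (Module.finrank F A + l), f W ^ 2 := by
  have hq : 1 < Fintype.card F := Fintype.one_lt_card
  induction l generalizing m f with
  | zero =>
    rw [br_zero]
    simp only [mul_zero, zero_mul, add_zero]
    apply le_of_eq
    apply Finset.sum_eq_zero
    intro W' hW'
    simp only [add_zero] at hf
    have : (lev A B (Module.finrank F A)).filter (fun W => W ≤ W') =
        lev A B (Module.finrank F A) := by
      apply Finset.filter_true_of_mem
      intro Z hZ
      obtain ⟨h1, h2, h3⟩ := mem_lev.1 hZ
      rw [← Submodule.eq_of_le_of_finrank_eq h1 h3.symm]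
      exact (mem_lev.1 hW').1
    rw [this, hf]
    simp
  | succ l ih =>
    set k := Module.finrank F A + l with hk
    rw [show Module.finrank F A + (l + 1) = k + 1 by omega] at hf ⊢
    have hD := adj_bound (lev A B k) (lev A B (k + 1)) (fun x y => x ≤ y) f
      ((Fintype.card F : ℝ) * br (Fintype.card F) l * br (Fintype.card F) (m + 1))
      (by have := br_nonneg hq l; have := br_nonneg hq (m + 1); positivity)
      (by
        apply ih (m + 1) (by omega)
        rw [sum_op_const (lev A B (k + 1)) (lev A B k) (fun x y => y ≤ x) f
          _ (fun x hx => down_card hx), hf, mul_zero])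
    have e1 := sq_sum_count (lev A B (k + 1)) (lev A B (k + 2)) (fun x y => x ≤ y) f
    have e2 := sq_sum_count (lev A B (k + 1)) (lev A B k) (fun x y => y ≤ x) f
    have e3 : ∑ x₁ ∈ lev A B (k + 1), ∑ x₂ ∈ lev A B (k + 1), f x₁ * f x₂ *
        (((lev A B (k + 2)).filter fun y => x₁ ≤ y ∧ x₂ ≤ y).card : ℝ) =
        ∑ x₁ ∈ lev A B (k + 1), ∑ x₂ ∈ lev A B (k + 1), f x₁ * f x₂ *
        (((lev A B k).filter fun y => y ≤ x₁ ∧ y ≤ x₂).card : ℝ) +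
        (br (Fintype.card F) (m + 1) - br (Fintype.card F) (l + 1)) *
          ∑ x ∈ lev A B (k + 1), f x ^ 2 := by
      rw [Finset.mul_sum, ← Finset.sum_add_distrib]
      refine Finset.sum_congr rfl fun x₁ h₁ => ?_
      rw [← Finset.add_sum_erase _ _ h₁, ← Finset.add_sum_erase (lev A B (k + 1)) (fun x₂ =>
        f x₁ * f x₂ * (((lev A B k).filter fun y => y ≤ x₁ ∧ y ≤ x₂).card : ℝ)) h₁]
      have e4 : ∑ x₂ ∈ (lev A B (k + 1)).erase x₁, f x₁ * f x₂ *
          (((lev A B (k + 2)).filter fun y => x₁ ≤ y ∧ x₂ ≤ y).card : ℝ) =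
          ∑ x₂ ∈ (lev A B (k + 1)).erase x₁, f x₁ * f x₂ *
          (((lev A B k).filter fun y => y ≤ x₁ ∧ y ≤ x₂).card : ℝ) := by
        refine Finset.sum_congr rfl fun x₂ h₂ => ?_
        rw [updown_card h₁ (Finset.mem_of_mem_erase h₂) (Finset.ne_of_mem_erase h₂).symm]
      rw [e4]
      simp only [and_self]
      rw [up_card h₁, down_card h₁, show Module.finrank F B - (k + 1) = m + 1 by omega,
        show k + 1 - Module.finrank F A = l + 1 by omega]
      ring
    rw [e1, e3, ← e2]
    refine (add_le_add_left hD _).trans (le_of_eq ?_)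
    rw [← add_mul]
    congr 1
    rw [br_succ hq m, br_succ hq l]
    ring

/-- adjacent-level bound with normalised constant `1/q`. -/
lemma interval_bound' (A B : Submodule F (Fin d → F)) (k : ℕ) (hA : Module.finrank F A ≤ k)
    (hB : k + 1 ≤ Module.finrank F B) (f : Submodule F (Fin d → F) → ℝ)
    (hf : ∑ W ∈ lev A B k, f W = 0) :
    ∑ W' ∈ lev A B (k + 1), (∑ W ∈ (lev A B k).filter (fun W => W ≤ W'), f W) ^ 2 ≤
      (Fintype.card F : ℝ)⁻¹ * (br (Fintype.card F) (Module.finrank F B - k) *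
        br (Fintype.card F) (k + 1 - Module.finrank F A)) * ∑ W ∈ lev A B k, f W ^ 2 := by
  have hq : 1 < Fintype.card F := Fintype.one_lt_card
  obtain ⟨l, rfl⟩ := Nat.exists_eq_add_of_le hA
  obtain ⟨m, hm⟩ := Nat.exists_eq_add_of_le hB
  refine (interval_bound A B l m hm.symm f hf).trans ?_
  apply mul_le_mul_of_nonneg_right _ (Finset.sum_nonneg fun _ _ => sq_nonneg _)
  rw [show Module.finrank F B - (Module.finrank F A + l) = m + 1 by omega,
    show Module.finrank F A + l + 1 - Module.finrank F A = l + 1 by omega, br_succ hq, br_succ hq]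
  have h1 := br_nonneg hq l
  have h2 := br_nonneg hq m
  have hq' : (1 : ℝ) < Fintype.card F := by exact_mod_cast hq
  rw [inv_mul_eq_div, le_div_iff₀ (by linarith)]
  nlinarith [mul_nonneg h1 h2, mul_nonneg (by linarith : (0:ℝ) ≤ Fintype.card F) h1,
    mul_nonneg (by linarith : (0:ℝ) ≤ Fintype.card F) h2]

end FlagAux

namespace FlagAux

variable {F : Type} [Field F] [Fintype F] {d : ℕ}

/-- dimensions of the elements of `t`. -/
noncomputable def dims (t : Finset (Submodule F (Fin d → F))) : Finset ℕ :=
  t.image fun W : Submodule F (Fin d → F) => Module.finrank F W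

/-- Subspaces of dimension `i` comparable with all members of `t`. -/
noncomputable def cx (t : Finset (Submodule F (Fin d → F))) (i : ℕ) :
    Finset (Submodule F (Fin d → F)) :=
  univ.filter fun W => Module.finrank F W = i ∧ ∀ U ∈ t, U ≤ W ∨ W ≤ U

lemma mem_cx {t : Finset (Submodule F (Fin d → F))} {i : ℕ} {W : Submodule F (Fin d → F)} :
    W ∈ cx t i ↔ Module.finrank F W = i ∧ ∀ U ∈ t, U ≤ W ∨ W ≤ U := by
  simp [cx]

lemma dims_insert (t : Finset (Submodule F (Fin d → F))) (W : Submodule F (Fin d → F)) :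
    dims (insert W t) = insert (Module.finrank F W) (dims t) := by
  simp [dims, Finset.image_insert]

/-- The chain condition. -/
def Ch (t : Finset (Submodule F (Fin d → F))) : Prop :=
  IsChain (· ≤ ·) (t : Set (Submodule F (Fin d → F)))

lemma ch_insert {t : Finset (Submodule F (Fin d → F))} (ht : Ch t) {i : ℕ}
    {W : Submodule F (Fin d → F)} (hW : W ∈ cx t i) : Ch (insert W t) := by
  unfold Ch
  rw [Finset.coe_insert]
  refine IsChain.insert ht fun U hU _ => ?_
  exact ((mem_cx.1 hW).2 U hU).symm

lemma le_of_ch {t : Finset (Submodule F (Fin d → F))} (ht : Ch t)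
    {U V : Submodule F (Fin d → F)} (hU : U ∈ t) (hV : V ∈ t)
    (h : Module.finrank F U ≤ Module.finrank F V) : U ≤ V := by
  rcases ht.total hU hV with h1 | h1
  · exact h1
  · exact (Submodule.eq_of_le_of_finrank_le h1 h).symm.le

lemma le_of_cmp {U V : Submodule F (Fin d → F)} (hUV : U ≤ V ∨ V ≤ U)
    (h : Module.finrank F U ≤ Module.finrank F V) : U ≤ V := by
  rcases hUV with h1 | h1
  · exact h1
  · exact (Submodule.eq_of_le_of_finrank_le h1 h).symm.le

lemma cx_interval {t : Finset (Submodule F (Fin d → F))} (ht : Ch t) {i : ℕ} (hi : i < d) :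
    ∃ A B : Submodule F (Fin d → F), A ≤ B ∧ Module.finrank F A ≤ i ∧ i + 1 ≤ Module.finrank F B ∧
      Module.finrank F A ∈ insert 0 (insert d (dims t)) ∧
      Module.finrank F B ∈ insert 0 (insert d (dims t)) ∧
      (∀ m ∈ insert 0 (insert d (dims t)), m ≤ i → m ≤ Module.finrank F A) ∧
      (∀ m ∈ insert 0 (insert d (dims t)), i + 1 ≤ m → Module.finrank F B ≤ m) ∧
      cx t i = lev A B i ∧ cx t (i + 1) = lev A B (i + 1) := by
  set t' : Finset (Submodule F (Fin d → F)) := insert ⊥ (insert ⊤ t) with ht'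
  have hch : Ch t' := by
    have h1 : Ch (insert (⊤ : Submodule F (Fin d → F)) t) :=
      ch_insert ht (mem_cx.2 ⟨rfl, fun U _ => Or.inl le_top⟩)
    exact ch_insert h1 (mem_cx.2 ⟨rfl, fun U _ => Or.inr bot_le⟩)
  have hd : dims t' = insert 0 (insert d (dims t)) := by
    rw [ht', dims_insert, dims_insert, finrank_bot, finrank_top, Module.finrank_fin_fun]
  rw [← hd]
  obtain ⟨A, hA, hAmax⟩ := Finset.exists_max_image
    (t'.filter fun U : Submodule F (Fin d → F) => Module.finrank F U ≤ i) (fun U : Submodule F (Fin d → F) => Module.finrank F U)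
    ⟨⊥, by simp [ht']⟩
  obtain ⟨B, hB, hBmin⟩ := Finset.exists_min_image
    (t'.filter fun U : Submodule F (Fin d → F) => i + 1 ≤ Module.finrank F U) (fun U : Submodule F (Fin d → F) => Module.finrank F U)
    ⟨⊤, by simp only [mem_filter]; rw [finrank_top, Module.finrank_fin_fun]; simp [ht']; omega⟩
  rw [mem_filter] at hA hB
  have hmax : ∀ U ∈ t', Module.finrank F U ≤ i → U ≤ A := fun U hU h =>
    le_of_ch hch hU hA.1 (hAmax U (mem_filter.2 ⟨hU, h⟩))
  have hmin : ∀ U ∈ t', i + 1 ≤ Module.finrank F U → B ≤ U := fun U hU h =>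
    le_of_ch hch hB.1 hU (hBmin U (mem_filter.2 ⟨hU, h⟩))
  have hk : ∀ k, i ≤ k → k ≤ i + 1 → cx t k = lev A B k := by
    intro k h1 h2
    ext W
    rw [mem_cx, mem_lev]
    constructor
    · rintro ⟨h3, h4⟩
      have h5 : ∀ U ∈ t', U ≤ W ∨ W ≤ U := by
        intro U hU
        simp only [ht', mem_insert] at hU
        rcases hU with rfl | rfl | hU
        · exact Or.inl bot_le
        · exact Or.inr le_top
        · exact h4 U hU
      refine ⟨le_of_cmp (h5 A hA.1) (by omega), le_of_cmp (h5 B hB.1).symm (by omega), h3⟩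
    · rintro ⟨h3, h4, h5⟩
      refine ⟨h5, fun U hU => ?_⟩
      have hU' : U ∈ t' := by simp [ht', hU]
      rcases Nat.lt_or_ge i (Module.finrank F U) with h | h
      · exact Or.inr (h4.trans (hmin U hU' h))
      · exact Or.inl ((hmax U hU' h).trans h3)
  refine ⟨A, B, le_of_ch hch hA.1 hB.1 (by omega), hA.2, hB.2, Finset.mem_image_of_mem _ hA.1,
    Finset.mem_image_of_mem _ hB.1, ?_, ?_, hk i (by omega) (by omega),
    hk (i + 1) (by omega) (by omega)⟩
  · intro m hm h
    obtain ⟨U, hU, rfl⟩ := Finset.mem_image.1 hm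
    exact Submodule.finrank_mono (hmax U hU h)
  · intro m hm h
    obtain ⟨U, hU, rfl⟩ := Finset.mem_image.1 hm
    exact Submodule.finrank_mono (hmin U hU h)

lemma sum_card_swap {α β : Type*} (X : Finset α) (Y : Finset β) (R : α → β → Prop)
    (a b : ℝ) (ha : ∀ x ∈ X, ((Y.filter fun y => R x y).card : ℝ) = a)
    (hb : ∀ y ∈ Y, ((X.filter fun x => R x y).card : ℝ) = b) :
    (X.card : ℝ) * a = Y.card * b := by
  have := sum_op_const X Y R (fun _ => 1) a ha
  simp only [Finset.sum_const, nsmul_eq_mul, mul_one] at this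
  rw [mul_comm, ← this, Finset.sum_congr rfl hb]
  simp

lemma lev_rec (A B : Submodule F (Fin d → F)) (k : ℕ) :
    ((lev A B k).card : ℝ) * br (Fintype.card F) (Module.finrank F B - k) =
      (lev A B (k + 1)).card * br (Fintype.card F) (k + 1 - Module.finrank F A) :=
  sum_card_swap _ _ (fun x y => x ≤ y) _ _ (fun _ hx => up_card hx) (fun _ hy => down_card hy)

lemma lev_base {A B : Submodule F (Fin d → F)} (h : A ≤ B) :
    lev A B (Module.finrank F A) = {A} := by
  ext Z
  rw [mem_lev, mem_singleton]
  constructor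
  · rintro ⟨h1, h2, h3⟩
    exact (Submodule.eq_of_le_of_finrank_eq h1 h3.symm).symm
  · rintro rfl
    exact ⟨le_rfl, h, rfl⟩

lemma lev_card_eq {A B A' B' : Submodule F (Fin d → F)} (h : A ≤ B) (h' : A' ≤ B')
    (hA : Module.finrank F A = Module.finrank F A') (hB : Module.finrank F B = Module.finrank F B')
    (l : ℕ) : (lev A B (Module.finrank F A + l)).card = (lev A' B' (Module.finrank F A + l)).card := by
  have hq : 1 < Fintype.card F := Fintype.one_lt_card
  induction l with
  | zero => rw [add_zero, lev_base h, hA, lev_base h']; simp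
  | succ l ih =>
    have h1 := lev_rec A B (Module.finrank F A + l)
    have h2 := lev_rec A' B' (Module.finrank F A + l)
    rw [ih, hB] at h1
    rw [h1, ← hA] at h2
    rw [show Module.finrank F A + l + 1 - Module.finrank F A = l + 1 by omega] at h2
    exact_mod_cast mul_right_cancel₀ (br_pos hq l).ne' h2

lemma lev_card_pos {A B : Submodule F (Fin d → F)} (h : A ≤ B) (l : ℕ)
    (hl : Module.finrank F A + l ≤ Module.finrank F B) :
    0 < (lev A B (Module.finrank F A + l)).card := by
  have hq : 1 < Fintype.card F := Fintype.one_lt_card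
  induction l with
  | zero => rw [add_zero, lev_base h]; simp
  | succ l ih =>
    have h1 := lev_rec A B (Module.finrank F A + l)
    have h2 : (0 : ℝ) < (lev A B (Module.finrank F A + l)).card := by exact_mod_cast ih (by omega)
    obtain ⟨m, hm⟩ := Nat.exists_eq_add_of_le hl
    rw [show Module.finrank F B - (Module.finrank F A + l) = m + 1 by omega] at h1
    have h3 := mul_pos h2 (br_pos hq m)
    rw [h1] at h3
    have h4 := pos_of_mul_pos_left h3 (br_nonneg hq _)
    exact_mod_cast h4

lemma cx_card_eq {t t' : Finset (Submodule F (Fin d → F))} (ht : Ch t) (ht' : Ch t')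
    (h : dims t = dims t') {i : ℕ} (hi : i < d) : (cx t i).card = (cx t' i).card := by
  obtain ⟨A, B, h1, h2, h3, h4, h5, h6, h7, h8, -⟩ := cx_interval ht hi
  obtain ⟨A', B', g1, g2, g3, g4, g5, g6, g7, g8, -⟩ := cx_interval ht' hi
  rw [← h] at g4 g5 g6 g7
  have hA : Module.finrank F A = Module.finrank F A' :=
    le_antisymm (g6 _ h4 h2) (h6 _ g4 g2)
  have hB : Module.finrank F B = Module.finrank F B' :=
    le_antisymm (h7 _ g5 g3) (g7 _ h5 h3)
  obtain ⟨l, rfl⟩ := Nat.exists_eq_add_of_le h2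
  rw [h8, g8]
  exact lev_card_eq h1 g1 hA hB l

lemma cx_card_pos {t : Finset (Submodule F (Fin d → F))} (ht : Ch t) {i : ℕ} (hi : i < d) :
    0 < (cx t i).card := by
  obtain ⟨A, B, h1, h2, h3, h4, h5, h6, h7, h8, -⟩ := cx_interval ht hi
  obtain ⟨l, rfl⟩ := Nat.exists_eq_add_of_le h2
  rw [h8]
  exact lev_card_pos h1 l (by omega)

variable (F d) in
/-- the common cardinality of `cx t i` for chains `t` with `dims t = D`. -/
noncomputable def Nc (D : Finset ℕ) (i : ℕ) : ℝ :=
  if h : ∃ t : Finset (Submodule F (Fin d → F)), Ch t ∧ dims t = D then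
    ((cx h.choose i).card : ℝ) else 1

lemma Nc_eq {t : Finset (Submodule F (Fin d → F))} (ht : Ch t) {i : ℕ} (hi : i < d) :
    ((cx t i).card : ℝ) = Nc F d (dims t) i := by
  have h : ∃ t' : Finset (Submodule F (Fin d → F)), Ch t' ∧ dims t' = dims t := ⟨t, ht, rfl⟩
  unfold Nc
  rw [dif_pos h]
  exact_mod_cast cx_card_eq ht h.choose_spec.1 h.choose_spec.2.symm hi

lemma Nc_pos (D : Finset ℕ) {i : ℕ} (hi : i < d) : 0 < Nc F d D i := by
  unfold Nc
  split_ifs with h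
  · exact_mod_cast cx_card_pos h.choose_spec.1 hi
  · exact one_pos

lemma cx_up {s : Finset (Submodule F (Fin d → F))} {i j : ℕ} {x : Submodule F (Fin d → F)}
    (hx : x ∈ cx s i) (hij : i ≤ j) : (cx s j).filter (fun y => x ≤ y) = cx (insert x s) j := by
  ext y
  have hx' := mem_cx.1 hx
  simp only [mem_filter, mem_cx, mem_insert, forall_eq_or_imp]
  constructor
  · rintro ⟨⟨h1, h2⟩, h3⟩; exact ⟨h1, Or.inl h3, h2⟩
  · rintro ⟨h1, h2, h3⟩; exact ⟨⟨h1, h3⟩, le_of_cmp h2 (by omega)⟩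

lemma cx_down {s : Finset (Submodule F (Fin d → F))} {i j : ℕ} {y : Submodule F (Fin d → F)}
    (hy : y ∈ cx s j) (hij : i ≤ j) : (cx s i).filter (fun x => x ≤ y) = cx (insert y s) i := by
  ext x
  have hy' := mem_cx.1 hy
  simp only [mem_filter, mem_cx, mem_insert, forall_eq_or_imp]
  constructor
  · rintro ⟨⟨h1, h2⟩, h3⟩; exact ⟨h1, Or.inr h3, h2⟩
  · rintro ⟨h1, h2, h3⟩; exact ⟨⟨h1, h3⟩, le_of_cmp h2.symm (by omega)⟩

lemma up_Nc {s : Finset (Submodule F (Fin d → F))} (hs : Ch s) {i j : ℕ}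
    {x : Submodule F (Fin d → F)} (hx : x ∈ cx s i) (hij : i ≤ j) (hj : j < d) :
    (((cx s j).filter (fun y => x ≤ y)).card : ℝ) = Nc F d (insert i (dims s)) j := by
  rw [cx_up hx hij, Nc_eq (ch_insert hs hx) hj, dims_insert, (mem_cx.1 hx).1]

lemma down_Nc {s : Finset (Submodule F (Fin d → F))} (hs : Ch s) {i j : ℕ}
    {y : Submodule F (Fin d → F)} (hy : y ∈ cx s j) (hij : i ≤ j) (hj : j < d) :
    (((cx s i).filter (fun x => x ≤ y)).card : ℝ) = Nc F d (insert j (dims s)) i := by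
  rw [cx_down hy hij, Nc_eq (ch_insert hs hy) (by omega), dims_insert, (mem_cx.1 hy).1]

lemma mid_Nc {s : Finset (Submodule F (Fin d → F))} (hs : Ch s) {i j k : ℕ}
    {x z : Submodule F (Fin d → F)} (hx : x ∈ cx s i) (hz : z ∈ cx s k) (hxz : x ≤ z)
    (hij : i ≤ j) (hjk : j ≤ k) (hj : j < d) :
    (((cx s j).filter (fun y => x ≤ y ∧ y ≤ z)).card : ℝ) =
      Nc F d (insert i (insert k (dims s))) j := by
  have h1 : x ∈ cx (insert z s) i := by
    have := mem_cx.1 hx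
    simp only [mem_cx, mem_insert, forall_eq_or_imp]
    exact ⟨this.1, Or.inr hxz, this.2⟩
  have h2 : (cx s j).filter (fun y => x ≤ y ∧ y ≤ z) = cx (insert x (insert z s)) j := by
    rw [← cx_up h1 hij, ← cx_down hz hjk, Finset.filter_filter]
    congr 1
    ext y
    exact and_comm
  rw [h2, Nc_eq (ch_insert (ch_insert hs hz) h1) hj, dims_insert, dims_insert, (mem_cx.1 hx).1,
    (mem_cx.1 hz).1]

lemma step_bound {s : Finset (Submodule F (Fin d → F))} (hs : Ch s) {j : ℕ} (hj : j + 1 < d)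
    (f : Submodule F (Fin d → F) → ℝ) (hf : ∑ x ∈ cx s j, f x = 0) :
    ∑ y ∈ cx s (j + 1), (∑ x ∈ (cx s j).filter (fun x => x ≤ y), f x) ^ 2 ≤
      (Fintype.card F : ℝ)⁻¹ * (Nc F d (insert j (dims s)) (j + 1) *
        Nc F d (insert (j + 1) (dims s)) j) * ∑ x ∈ cx s j, f x ^ 2 := by
  obtain ⟨x, hx⟩ := Finset.card_pos.1 (cx_card_pos hs (show j < d by omega))
  obtain ⟨y, hy⟩ := Finset.card_pos.1 (cx_card_pos hs hj)
  rw [← up_Nc hs hx (by omega) hj, ← down_Nc hs hy (by omega) hj]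
  obtain ⟨A, B, h1, h2, h3, -, -, -, -, h8, h9⟩ := cx_interval hs (show j < d by omega)
  rw [h8] at hx hf ⊢
  rw [h9] at hy ⊢
  rw [up_card hx, down_card hy]
  exact interval_bound' A B j h2 h3 f hf

lemma chain_bound {s : Finset (Submodule F (Fin d → F))} (hs : Ch s) (i n : ℕ) (hn : i + n < d)
    (f : Submodule F (Fin d → F) → ℝ) (hf : ∑ x ∈ cx s i, f x = 0) :
    ∑ y ∈ cx s (i + n), (∑ x ∈ (cx s i).filter (fun x => x ≤ y), f x) ^ 2 ≤
      (Fintype.card F : ℝ)⁻¹ ^ n * (Nc F d (insert i (dims s)) (i + n) *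
        Nc F d (insert (i + n) (dims s)) i) * ∑ x ∈ cx s i, f x ^ 2 := by
  induction n with
  | zero =>
    simp only [add_zero, pow_zero, one_mul] at hn ⊢
    have h1 : 1 ≤ Nc F d (insert i (dims s)) i := by
      obtain ⟨x, hx⟩ := Finset.card_pos.1 (cx_card_pos hs hn)
      rw [← up_Nc hs hx le_rfl hn, Nat.one_le_cast]
      exact Finset.card_pos.2 ⟨x, mem_filter.2 ⟨hx, le_rfl⟩⟩
    have h2 : ∑ y ∈ cx s i, (∑ x ∈ (cx s i).filter (fun x => x ≤ y), f x) ^ 2 =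
        ∑ x ∈ cx s i, f x ^ 2 := by
      refine Finset.sum_congr rfl fun y hy => ?_
      have : (cx s i).filter (fun x => x ≤ y) = {y} := by
        ext x
        rw [mem_filter, mem_singleton]
        constructor
        · rintro ⟨h3, h4⟩
          exact Submodule.eq_of_le_of_finrank_eq h4 ((mem_cx.1 h3).1.trans (mem_cx.1 hy).1.symm)
        · rintro rfl; exact ⟨hy, le_rfl⟩
      rw [this, Finset.sum_singleton]
    rw [h2]
    have h3 : 0 ≤ ∑ x ∈ cx s i, f x ^ 2 := Finset.sum_nonneg fun _ _ => sq_nonneg _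
    nlinarith [mul_le_mul h1 h1 zero_le_one (by linarith)]
  | succ n ih =>
    specialize ih (by omega)
    set j := i + n with hj
    rw [show i + (n + 1) = j + 1 by omega] at hn ⊢
    set c := Nc F d (insert i (insert (j + 1) (dims s))) j with hc
    have hc0 : 0 < c := Nc_pos _ (by omega)
    set h : Submodule F (Fin d → F) → ℝ :=
      fun y => ∑ x ∈ (cx s i).filter (fun x => x ≤ y), f x with hh
    have hsum : ∑ y ∈ cx s j, h y = 0 := by
      rw [hh, sum_op_const (cx s i) (cx s j) (fun x y => x ≤ y) f _
        (fun x hx => up_Nc hs hx (by omega) (by omega)), hf, mul_zero]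
    have hstep := step_bound hs hn h hsum
    -- composition of the operators
    have hcomp : ∀ z ∈ cx s (j + 1), ∑ y ∈ (cx s j).filter (fun y => y ≤ z), h y =
        c * ∑ x ∈ (cx s i).filter (fun x => x ≤ z), f x := by
      intro z hz
      rw [hh, sum_op_const' (cx s i) ((cx s j).filter (fun y => y ≤ z)) (fun x y => x ≤ y) f,
        Finset.mul_sum, Finset.sum_filter]
      refine Finset.sum_congr rfl fun x hx => ?_
      rw [Finset.filter_filter]
      split_ifs with hxz
      · rw [hc, ← mid_Nc hs hx hz hxz (by omega) (by omega) (by omega), mul_comm]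
        simp only [and_comm]
      · have : (cx s j).filter (fun a => a ≤ z ∧ x ≤ a) = ∅ := by
          apply Finset.filter_false_of_mem
          rintro a _ ⟨h1, h2⟩
          exact hxz (h2.trans h1)
        rw [this]; simp
    rw [Finset.sum_congr rfl fun z hz => by rw [hcomp z hz, mul_pow], ← Finset.mul_sum] at hstep
    have ha : c * Nc F d (insert i (dims s)) (j + 1) =
        Nc F d (insert i (dims s)) j * Nc F d (insert j (dims s)) (j + 1) := by
      obtain ⟨x, hx⟩ := Finset.card_pos.1 (cx_card_pos hs (show i < d by omega))
      have := sum_card_swap ((cx s j).filter fun y => x ≤ y) ((cx s (j + 1)).filter fun z => x ≤ z)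
        (fun y z => y ≤ z) (Nc F d (insert j (dims s)) (j + 1)) c ?_ ?_
      · rw [up_Nc hs hx (by omega) (by omega), up_Nc hs hx (by omega) (by omega)] at this
        linarith
      · intro y hy
        rw [mem_filter] at hy
        rw [← up_Nc hs hy.1 (by omega) hn, Finset.filter_filter]
        congr 2
        ext z
        simp only [mem_filter]
        exact ⟨fun h => ⟨h.1, h.2.2⟩, fun h => ⟨h.1, hy.2.trans h.2, h.2⟩⟩
      · intro z hz
        rw [mem_filter] at hz
        rw [Finset.filter_filter, mid_Nc hs hx hz.1 hz.2 (by omega) (by omega) (by omega)]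
    have hb : c * Nc F d (insert (j + 1) (dims s)) i =
        Nc F d (insert j (dims s)) i * Nc F d (insert (j + 1) (dims s)) j := by
      obtain ⟨z, hz⟩ := Finset.card_pos.1 (cx_card_pos hs hn)
      have := sum_card_swap ((cx s i).filter fun x => x ≤ z) ((cx s j).filter fun y => y ≤ z)
        (fun x y => x ≤ y) c (Nc F d (insert j (dims s)) i) ?_ ?_
      · rw [down_Nc hs hz (by omega) (by omega), down_Nc hs hz (by omega) (by omega)] at this
        linarith
      · intro x hx
        rw [mem_filter] at hx
        rw [Finset.filter_filter, hc, ← mid_Nc hs hx.1 hz hx.2 (j := j) (by omega) (by omega) (by omega)]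
        simp only [and_comm]
      · intro y hy
        rw [mem_filter] at hy
        rw [← down_Nc hs hy.1 (by omega) (by omega), Finset.filter_filter]
        congr 2
        ext x
        simp only [mem_filter]
        exact ⟨fun h => ⟨h.1, h.2.2⟩, fun h => ⟨h.1, h.2.trans hy.2, h.2⟩⟩
    have hpos1 : 0 < Nc F d (insert j (dims s)) (j + 1) := Nc_pos _ hn
    have hpos2 : 0 < Nc F d (insert (j + 1) (dims s)) j := Nc_pos _ (by omega)
    have hq : (0 : ℝ) ≤ (Fintype.card F : ℝ)⁻¹ := by positivity
    have hfin := hstep.trans (mul_le_mul_of_nonneg_left ih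
      (mul_nonneg hq (mul_nonneg hpos1.le hpos2.le)))
    have hc2 : 0 < c ^ 2 := by positivity
    refine le_of_mul_le_mul_left (hfin.trans (le_of_eq ?_)) hc2
    rw [pow_succ]
    linear_combination (-(Fintype.card F : ℝ)⁻¹ ^ n * (Fintype.card F : ℝ)⁻¹ *
      (∑ x ∈ cx s i, f x ^ 2)) * (c * Nc F d (insert (j + 1) (dims s)) i * ha +
       Nc F d (insert i (dims s)) j * Nc F d (insert j (dims s)) (j + 1) * hb)

end FlagAux

namespace FlagAux

variable {F : Type} [Field F] [Fintype F] {d : ℕ}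

lemma mem_max {S : Finset ℕ} {s T : Finset (Submodule F (Fin d → F))} :
    T ∈ maxFacesAbove F d S s ↔ IsMaxFlagFace F d S T ∧ s ⊆ T := by
  simp [maxFacesAbove]

lemma filter_dim {S : Finset ℕ} {T : Finset (Submodule F (Fin d → F))}
    (hT : IsMaxFlagFace F d S T) {i : ℕ} (hi : i ∈ S) :
    ∃ U, U ∈ T ∧ Module.finrank F U = i ∧
      T.filter (fun U : Submodule F (Fin d → F) => Module.finrank F U = i) = {U} := by
  obtain ⟨U, hU, h⟩ := hT.2 i hi
  refine ⟨U, hU, h, ?_⟩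
  ext V
  rw [mem_filter, mem_singleton]
  constructor
  · rintro ⟨h1, h2⟩
    exact le_antisymm (le_of_ch hT.1.1 h1 hU (by omega)) (le_of_ch hT.1.1 hU h1 (by omega))
  · rintro rfl; exact ⟨hU, h⟩

lemma mem_cx_of_max {S : Finset ℕ} {s T : Finset (Submodule F (Fin d → F))}
    (hT : T ∈ maxFacesAbove F d S s) {U : Submodule F (Fin d → F)} (hU : U ∈ T) :
    U ∈ cx s (Module.finrank F U) := by
  rw [mem_max] at hT
  exact mem_cx.2 ⟨rfl, fun V hV => hT.1.1.1.total (hT.2 hV) hU⟩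

lemma filter_max_mem (S : Finset ℕ) (s : Finset (Submodule F (Fin d → F)))
    (U : Submodule F (Fin d → F)) :
    (maxFacesAbove F d S s).filter (fun T => U ∈ T) = maxFacesAbove F d S (insert U s) := by
  ext T
  simp only [mem_filter, mem_max, Finset.insert_subset_iff]
  tauto

lemma filter_cx {S : Finset ℕ} {s T : Finset (Submodule F (Fin d → F))}
    (hT : T ∈ maxFacesAbove F d S s) (i : ℕ) :
    T.filter (fun U : Submodule F (Fin d → F) => Module.finrank F U = i) =
      (cx s i).filter (fun U => U ∈ T) := by
  ext U
  simp only [mem_filter]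
  constructor
  · rintro ⟨h1, rfl⟩
    exact ⟨mem_cx_of_max hT h1, h1⟩
  · rintro ⟨h1, h2⟩
    exact ⟨h2, (mem_cx.1 h1).1⟩

lemma sum_max (S : Finset ℕ) (s : Finset (Submodule F (Fin d → F))) (i : ℕ)
    (h : Submodule F (Fin d → F) → ℝ) :
    ∑ T ∈ maxFacesAbove F d S s,
      ∑ U ∈ T.filter (fun U : Submodule F (Fin d → F) => Module.finrank F U = i), h U =
      ∑ U ∈ cx s i, h U * ((maxFacesAbove F d S (insert U s)).card : ℝ) := by
  rw [Finset.sum_congr rfl fun T hT => by rw [filter_cx hT i]]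
  refine Eq.trans ?_
    ((sum_op_const' (cx s i) (maxFacesAbove F d S s) (fun U T => U ∈ T) h).trans ?_)
  · refine Finset.sum_congr rfl fun T _ => ?_
    congr!
  · refine Finset.sum_congr rfl fun U _ => ?_
    rw [← filter_max_mem]
    congr!

lemma card_max_rec {S : Finset ℕ} (s : Finset (Submodule F (Fin d → F))) {i : ℕ} (hi : i ∈ S) :
    ((maxFacesAbove F d S s).card : ℝ) =
      ∑ U ∈ cx s i, ((maxFacesAbove F d S (insert U s)).card : ℝ) := by
  have := sum_max S s i (fun _ => 1)
  simp only [one_mul] at this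
  rw [← this, Finset.card_eq_sum_ones, Nat.cast_sum]
  refine Finset.sum_congr rfl fun T hT => ?_
  obtain ⟨U, -, -, h⟩ := filter_dim (mem_max.1 hT).1 hi
  rw [h]; simp

lemma face_insert {S : Finset ℕ} {t : Finset (Submodule F (Fin d → F))}
    (ht : IsFlagFace F d S t) {i : ℕ} (hi : i ∈ S) {W : Submodule F (Fin d → F)}
    (hW : W ∈ cx t i) : IsFlagFace F d S (insert W t) := by
  refine ⟨ch_insert ht.1 hW, ?_⟩
  intro U hU
  rw [mem_insert] at hU
  rcases hU with rfl | hU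
  · rw [(mem_cx.1 hW).1]; exact hi
  · exact ht.2 U hU

lemma max_card_eq {S : Finset ℕ} (hS : ∀ i ∈ S, i < d) (n : ℕ) :
    ∀ {t t' : Finset (Submodule F (Fin d → F))}, IsFlagFace F d S t → IsFlagFace F d S t' →
    dims t = dims t' → (S \ dims t).card = n →
    ((maxFacesAbove F d S t).card : ℝ) = (maxFacesAbove F d S t').card := by
  induction n with
  | zero =>
    intro t t' ht ht' hD hn
    have key : ∀ r : Finset (Submodule F (Fin d → F)), IsFlagFace F d S r →
        S \ dims r = ∅ → maxFacesAbove F d S r = {r} := by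
      intro r hr hS
      rw [Finset.sdiff_eq_empty_iff_subset] at hS
      ext T
      rw [mem_max, mem_singleton]
      constructor
      · rintro ⟨h1, h2⟩
        refine Finset.Subset.antisymm (fun U hU => ?_) h2
        obtain ⟨V, hV, hVU⟩ := Finset.mem_image.1 (hS (h1.1.2 U hU))
        have hV' := h2 hV
        rw [show U = V from le_antisymm (le_of_ch h1.1.1 hU hV' hVU.ge)
          (le_of_ch h1.1.1 hV' hU hVU.le)]
        exact hV
      · rintro rfl
        refine ⟨⟨hr, fun i hi => ?_⟩, Finset.Subset.refl _⟩
        obtain ⟨V, hV, hVU⟩ := Finset.mem_image.1 (hS hi)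
        exact ⟨V, hV, hVU⟩
    rw [Finset.card_eq_zero] at hn
    rw [key t ht hn, key t' ht' (hD ▸ hn)]
    simp
  | succ n ih =>
    intro t t' ht ht' hD hn
    obtain ⟨i, hi⟩ := Finset.card_pos.1 (by omega : 0 < (S \ dims t).card)
    have hi' := Finset.mem_sdiff.1 hi
    rw [card_max_rec t hi'.1, card_max_rec t' hi'.1]
    obtain ⟨W, hW⟩ := Finset.card_pos.1 (cx_card_pos ht.1 (hS i hi'.1))
    have hdim : ∀ r : Finset (Submodule F (Fin d → F)), dims t = dims r → IsFlagFace F d S r →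
        ∀ U ∈ cx r i, ((maxFacesAbove F d S (insert U r)).card : ℝ) =
          (maxFacesAbove F d S (insert W t)).card := by
      intro r hr hrf U hU
      have e1 : dims (insert U r) = insert i (dims t) := by
        rw [dims_insert, (mem_cx.1 hU).1, hr]
      have e2 : dims (insert W t) = insert i (dims t) := by
        rw [dims_insert, (mem_cx.1 hW).1]
      apply ih (face_insert hrf hi'.1 hU) (face_insert ht hi'.1 hW) (e1.trans e2.symm)
      rw [e1, Finset.sdiff_insert, Finset.card_erase_of_mem hi]
      omega
    rw [Finset.sum_congr rfl (hdim t rfl ht), Finset.sum_congr rfl (hdim t' hD ht'),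
      Finset.sum_const, Finset.sum_const, cx_card_eq ht.1 ht'.1 hD (hS i hi'.1)]

variable (F d) in
/-- the common number of maximal faces above faces with dimension set `D`. -/
noncomputable def Nm (S D : Finset ℕ) : ℝ :=
  if h : ∃ t : Finset (Submodule F (Fin d → F)), IsFlagFace F d S t ∧ dims t = D then
    ((maxFacesAbove F d S h.choose).card : ℝ) else 0

lemma Nm_eq {S : Finset ℕ} (hS : ∀ i ∈ S, i < d) {t : Finset (Submodule F (Fin d → F))}
    (ht : IsFlagFace F d S t) : ((maxFacesAbove F d S t).card : ℝ) = Nm F d S (dims t) := by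
  have h : ∃ t' : Finset (Submodule F (Fin d → F)), IsFlagFace F d S t' ∧ dims t' = dims t :=
    ⟨t, ht, rfl⟩
  unfold Nm
  rw [dif_pos h]
  exact max_card_eq hS _ ht h.choose_spec.1 h.choose_spec.2.symm rfl

lemma Nm_nonneg (S D : Finset ℕ) : 0 ≤ Nm F d S D := by
  unfold Nm; split_ifs <;> positivity

lemma sum_max' {S : Finset ℕ} (hS : ∀ i ∈ S, i < d) {s : Finset (Submodule F (Fin d → F))}
    (hs : IsFlagFace F d S s) {i : ℕ} (hi : i ∈ S) (h : Submodule F (Fin d → F) → ℝ) :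
    ∑ T ∈ maxFacesAbove F d S s,
      ∑ U ∈ T.filter (fun U : Submodule F (Fin d → F) => Module.finrank F U = i), h U =
      Nm F d S (insert i (dims s)) * ∑ U ∈ cx s i, h U := by
  rw [sum_max, Finset.mul_sum]
  refine Finset.sum_congr rfl fun U hU => ?_
  rw [Nm_eq hS (face_insert hs hi hU), dims_insert, (mem_cx.1 hU).1, mul_comm]

lemma Nm_rec {S : Finset ℕ} (hS : ∀ i ∈ S, i < d) {s : Finset (Submodule F (Fin d → F))}
    (hs : IsFlagFace F d S s) {i : ℕ} (hi : i ∈ S) :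
    Nm F d S (dims s) = Nm F d S (insert i (dims s)) * Nc F d (dims s) i := by
  rw [← Nm_eq hS hs, card_max_rec s hi, ← Nc_eq hs.1 (hS i hi)]
  rw [Finset.sum_congr rfl fun U hU => by
    rw [Nm_eq hS (face_insert hs hi hU), dims_insert, (mem_cx.1 hU).1]]
  rw [Finset.sum_const, nsmul_eq_mul, mul_comm]

lemma pair_bound {S : Finset ℕ} (hS : ∀ i ∈ S, i < d) {s : Finset (Submodule F (Fin d → F))}
    (hs : IsFlagFace F d S s) {i j : ℕ} (hi : i ∈ S) (hj : j ∈ S) (hij : i < j)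
    (ρ : ℝ) (hρ : 0 < ρ) (hρ2 : ρ ^ 2 = (Fintype.card F : ℝ)⁻¹)
    (f : Submodule F (Fin d → F) → ℝ) (hf : ∑ x ∈ cx s i, f x = 0) :
    ∑ T ∈ maxFacesAbove F d S s,
      (∑ U ∈ T.filter (fun U : Submodule F (Fin d → F) => Module.finrank F U = i), f U) *
      (∑ U ∈ T.filter (fun U : Submodule F (Fin d → F) => Module.finrank F U = j), f U) ≤
    ρ ^ (j - i) / 2 * (
      ∑ T ∈ maxFacesAbove F d S s,
        ∑ U ∈ T.filter (fun U : Submodule F (Fin d → F) => Module.finrank F U = i), f U ^ 2 +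
      ∑ T ∈ maxFacesAbove F d S s,
        ∑ U ∈ T.filter (fun U : Submodule F (Fin d → F) => Module.finrank F U = j), f U ^ 2) := by
  obtain ⟨n, rfl⟩ := Nat.exists_eq_add_of_le hij.le
  have hjd := hS _ hj
  set j := i + n with hjn
  set m := Nm F d S (insert i (insert j (dims s))) with hm
  have hm0 : 0 ≤ m := Nm_nonneg _ _
  set a := Nc F d (insert i (dims s)) j with ha
  set b := Nc F d (insert j (dims s)) i with hb
  have ha0 : 0 < a := Nc_pos _ hjd
  have hb0 : 0 < b := Nc_pos _ (by omega)
  rw [sum_max' hS hs hi, sum_max' hS hs hj]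
  have hma : Nm F d S (insert i (dims s)) = m * a := by
    obtain ⟨U, hU⟩ := Finset.card_pos.1 (cx_card_pos hs.1 (hS i hi))
    have := Nm_rec hS (face_insert hs hi hU) hj
    rw [dims_insert, (mem_cx.1 hU).1] at this
    rw [this, Finset.insert_comm]
  have hmb : Nm F d S (insert j (dims s)) = m * b := by
    obtain ⟨U, hU⟩ := Finset.card_pos.1 (cx_card_pos hs.1 (hS j hj))
    have := Nm_rec hS (face_insert hs hj hU) hi
    rw [dims_insert, (mem_cx.1 hU).1] at this
    rw [this]
  rw [hma, hmb]
  -- rewrite the left-hand side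
  have hL : ∑ T ∈ maxFacesAbove F d S s,
      (∑ U ∈ T.filter (fun U : Submodule F (Fin d → F) => Module.finrank F U = i), f U) *
      (∑ U ∈ T.filter (fun U : Submodule F (Fin d → F) => Module.finrank F U = j), f U) =
      m * ∑ V ∈ cx s j, f V * ∑ U ∈ (cx s i).filter (fun U => U ≤ V), f U := by
    have e1 : ∀ T ∈ maxFacesAbove F d S s,
      (∑ U ∈ T.filter (fun U : Submodule F (Fin d → F) => Module.finrank F U = i), f U) *
      (∑ U ∈ T.filter (fun U : Submodule F (Fin d → F) => Module.finrank F U = j), f U) =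
      ∑ V ∈ cx s j, ∑ U ∈ cx s i, f V * f U * (if U ∈ T ∧ V ∈ T then 1 else 0) := by
      intro T hT
      rw [filter_cx hT, filter_cx hT, mul_comm, Finset.sum_filter, Finset.sum_filter,
        Finset.sum_mul_sum]
      refine Finset.sum_congr rfl fun V _ => Finset.sum_congr rfl fun U _ => ?_
      by_cases h1 : U ∈ T <;> by_cases h2 : V ∈ T <;> simp [h1, h2]
    rw [Finset.sum_congr rfl e1, Finset.sum_comm, Finset.mul_sum]
    refine Finset.sum_congr rfl fun V hV => ?_
    rw [Finset.sum_comm, Finset.mul_sum, Finset.mul_sum, Finset.sum_filter]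
    refine Finset.sum_congr rfl fun U hU => ?_
    rw [← Finset.mul_sum]
    have e2 : ∑ T ∈ maxFacesAbove F d S s, (if U ∈ T ∧ V ∈ T then (1 : ℝ) else 0) =
        if U ≤ V then m else 0 := by
      split_ifs with hUV
      · have hU' : U ∈ cx (insert V s) i := by
          rw [← cx_down hV hij.le]
          exact mem_filter.2 ⟨hU, hUV⟩
        have := Nm_eq hS (face_insert (face_insert hs hj hV) hi hU')
        rw [dims_insert, dims_insert, (mem_cx.1 hU).1, (mem_cx.1 hV).1] at this
        rw [hm, ← this, ← filter_max_mem, ← filter_max_mem, Finset.filter_filter]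
        simp only [and_comm, Finset.sum_boole]
      · apply Finset.sum_eq_zero
        intro T hT
        rw [if_neg]
        rintro ⟨h1, h2⟩
        apply hUV
        apply le_of_ch (mem_max.1 hT).1.1.1 h1 h2
        rw [(mem_cx.1 hU).1, (mem_cx.1 hV).1]
        exact hij.le
    rw [e2]
    split_ifs <;> ring
  rw [hL, show j - i = n by omega]
  have hK := chain_bound hs.1 i n hjd f hf
  rw [← hρ2, ← hjn] at hK
  set r := ρ ^ n with hr
  have hr0 : 0 < r := by positivity
  rw [show (ρ ^ 2) ^ n = r ^ 2 by rw [hr, ← pow_mul, ← pow_mul, mul_comm], ← ha, ← hb] at hK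
  set K : Submodule F (Fin d → F) → ℝ := fun V => ∑ U ∈ (cx s i).filter (fun U => U ≤ V), f U
    with hKdef
  change ∑ V ∈ cx s j, (K V) ^ 2 ≤ _ at hK
  change m * ∑ V ∈ cx s j, f V * K V ≤ _
  have hrb : 0 < r * b := by positivity
  have hcs : 2 * (r * b) * ∑ V ∈ cx s j, f V * K V ≤
      (r * b) ^ 2 * ∑ V ∈ cx s j, f V ^ 2 + ∑ V ∈ cx s j, K V ^ 2 := by
    rw [Finset.mul_sum, Finset.mul_sum, ← Finset.sum_add_distrib]
    refine Finset.sum_le_sum fun V _ => ?_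
    nlinarith [sq_nonneg (r * b * f V - K V)]
  set Q1 := ∑ V ∈ cx s i, f V ^ 2
  set Q2 := ∑ V ∈ cx s j, f V ^ 2
  have h2 : ∑ V ∈ cx s j, f V * K V ≤ r / 2 * (a * Q1 + b * Q2) := by
    refine le_of_mul_le_mul_left ((hcs.trans (add_le_add_right hK _)).trans (le_of_eq ?_))
      (show 0 < 2 * (r * b) by positivity)
    ring
  calc _ ≤ m * (r / 2 * (a * Q1 + b * Q2)) := mul_le_mul_of_nonneg_left h2 hm0
    _ = _ := by ring

lemma row_sum (I : Finset ℕ) (i : ℕ) (ρ : ℝ) (h0 : 0 < ρ) (h1 : ρ < 1) :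
    ∑ j ∈ I.erase i, ρ ^ ((j - i) + (i - j)) ≤ 2 * (ρ / (1 - ρ)) := by
  have geo : ∀ J : Finset ℕ, (∀ j ∈ J, 1 ≤ j) → ∑ j ∈ J, ρ ^ j ≤ ρ / (1 - ρ) := by
    intro J hJ
    have hs : HasSum (fun n : ℕ => ρ ^ (n + 1)) (ρ / (1 - ρ)) := by
      have := (hasSum_geometric_of_lt_one h0.le h1).mul_left ρ
      simpa [pow_succ, mul_comm, div_eq_mul_inv] using this
    have e : ∑ j ∈ J, ρ ^ j = ∑ n ∈ J.image (fun j => j - 1), ρ ^ (n + 1) := by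
      rw [Finset.sum_image]
      · refine Finset.sum_congr rfl fun j hj => ?_
        rw [Nat.sub_add_cancel (hJ j hj)]
      · intro x hx y hy hxy
        have := hJ x hx; have := hJ y hy
        simp only at hxy
        omega
    rw [e]
    exact sum_le_hasSum _ (fun n _ => by positivity) hs
  rw [← Finset.sum_filter_add_sum_filter_not (I.erase i) (fun j => i < j), two_mul]
  refine add_le_add ?_ ?_
  · have e : ∑ j ∈ (I.erase i).filter (fun j => i < j), ρ ^ ((j - i) + (i - j)) =
        ∑ n ∈ ((I.erase i).filter (fun j => i < j)).image (fun j => j - i), ρ ^ n := by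
      rw [Finset.sum_image]
      · refine Finset.sum_congr rfl fun j hj => ?_
        rw [mem_filter] at hj
        congr 1; omega
      · intro x hx y hy hxy
        simp only [coe_filter, Set.mem_ofPred_eq] at hx hy hxy
        omega
    rw [e]
    apply geo
    intro n hn
    obtain ⟨j, hj, rfl⟩ := Finset.mem_image.1 hn
    rw [mem_filter] at hj
    omega
  · have e : ∑ j ∈ (I.erase i).filter (fun j => ¬ i < j), ρ ^ ((j - i) + (i - j)) =
        ∑ n ∈ ((I.erase i).filter (fun j => ¬ i < j)).image (fun j => i - j), ρ ^ n := by
      rw [Finset.sum_image]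
      · refine Finset.sum_congr rfl fun j hj => ?_
        rw [mem_filter] at hj
        congr 1; omega
      · intro x hx y hy hxy
        simp only [coe_filter, Set.mem_ofPred_eq, mem_erase] at hx hy hxy
        omega
    rw [e]
    apply geo
    intro n hn
    obtain ⟨j, hj, rfl⟩ := Finset.mem_image.1 hn
    rw [mem_filter, mem_erase] at hj
    omega

end FlagAux

namespace FlagAux

variable {F : Type} [Field F] [Fintype F] {d : ℕ}

lemma sum_sdiff_eq {S : Finset ℕ} {s T : Finset (Submodule F (Fin d → F))}
    (hT : T ∈ maxFacesAbove F d S s) (h : Submodule F (Fin d → F) → ℝ) :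
    ∑ U ∈ T \ s, h U = ∑ i ∈ S \ dims s,
      ∑ U ∈ T.filter (fun U : Submodule F (Fin d → F) => Module.finrank F U = i), h U := by
  have hT' := mem_max.1 hT
  rw [← Finset.sum_fiberwise_of_maps_to (s := T \ s) (t := S \ dims s)
    (g := fun U : Submodule F (Fin d → F) => Module.finrank F U)]
  · refine Finset.sum_congr rfl fun i hi => Finset.sum_congr ?_ fun _ _ => rfl
    ext U
    simp only [mem_filter, mem_sdiff]
    constructor
    · rintro ⟨⟨h1, h2⟩, h3⟩; exact ⟨h1, h3⟩
    · rintro ⟨h1, h3⟩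
      refine ⟨⟨h1, fun h2 => ?_⟩, h3⟩
      exact (mem_sdiff.1 hi).2 (Finset.mem_image.2 ⟨U, h2, h3⟩)
  · intro U hU
    rw [mem_sdiff] at hU ⊢
    refine ⟨hT'.1.1.2 U hU.1, fun h2 => hU.2 ?_⟩
    obtain ⟨V, hV, hVU⟩ := Finset.mem_image.1 h2
    have hV' := hT'.2 hV
    rw [le_antisymm (le_of_ch hT'.1.1.1 hU.1 hV' hVU.ge) (le_of_ch hT'.1.1.1 hV' hU.1 hVU.le)]
    exact hV

lemma card_sdiff_eq {S : Finset ℕ} {s T : Finset (Submodule F (Fin d → F))}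
    (hT : T ∈ maxFacesAbove F d S s) :
    (((T \ s).card : ℕ) : ℝ) = (S.card : ℝ) - s.card := by
  have hT' := mem_max.1 hT
  have h1 : T.card = S.card := by
    have hinj : Set.InjOn (fun U : Submodule F (Fin d → F) => Module.finrank F U) T := by
      intro U hU V hV h
      exact le_antisymm (le_of_ch hT'.1.1.1 hU hV h.le) (le_of_ch hT'.1.1.1 hV hU h.ge)
    rw [← Finset.card_image_of_injOn hinj]
    congr 1
    ext i
    rw [mem_image]
    constructor
    · rintro ⟨U, hU, rfl⟩; exact hT'.1.1.2 U hU
    · intro hi; exact hT'.1.2 i hi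
  rw [Finset.card_sdiff_of_subset hT'.2, Nat.cast_sub (Finset.card_le_card hT'.2), h1]

lemma pair_eq {α : Type*} [DecidableEq α] (X : Finset α) (f : α → ℝ) :
    ∑ U ∈ X, ∑ V ∈ X.erase U, f U * f V = (∑ U ∈ X, f U) ^ 2 - ∑ U ∈ X, f U ^ 2 := by
  rw [sq, Finset.sum_mul_sum, ← Finset.sum_sub_distrib]
  refine Finset.sum_congr rfl fun U hU => ?_
  rw [← Finset.add_sum_erase X (fun V => f U * f V) hU]
  ring

/-- The core inequality for functions with zero mean on each part. -/
lemma core {S : Finset ℕ} (hS : ∀ i ∈ S, i < d) {s : Finset (Submodule F (Fin d → F))}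
    (hs : IsFlagFace F d S s) (ρ : ℝ) (hρ : 0 < ρ) (hρ1 : ρ < 1)
    (hρ2 : ρ ^ 2 = (Fintype.card F : ℝ)⁻¹)
    (g : Submodule F (Fin d → F) → ℝ) (hg : ∀ i ∈ S \ dims s, ∑ x ∈ cx s i, g x = 0) :
    ∑ T ∈ maxFacesAbove F d S s, ((∑ U ∈ T \ s, g U) ^ 2 - ∑ U ∈ T \ s, g U ^ 2) ≤
      2 * (ρ / (1 - ρ)) * ∑ T ∈ maxFacesAbove F d S s, ∑ U ∈ T \ s, g U ^ 2 := by
  set I := S \ dims s with hI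
  set x : Finset (Submodule F (Fin d → F)) → ℕ → ℝ := fun T i =>
    ∑ U ∈ T.filter (fun U : Submodule F (Fin d → F) => Module.finrank F U = i), g U with hx
  set Q : ℕ → ℝ := fun i => ∑ T ∈ maxFacesAbove F d S s,
    ∑ U ∈ T.filter (fun U : Submodule F (Fin d → F) => Module.finrank F U = i), g U ^ 2 with hQ
  have hQ0 : ∀ i, 0 ≤ Q i := fun i =>
    Finset.sum_nonneg fun _ _ => Finset.sum_nonneg fun _ _ => sq_nonneg _
  have e1 : ∀ T ∈ maxFacesAbove F d S s,
      (∑ U ∈ T \ s, g U) ^ 2 - ∑ U ∈ T \ s, g U ^ 2 =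
      ∑ i ∈ I, ∑ j ∈ I.erase i, x T i * x T j := by
    intro T hT
    rw [pair_eq I (x T), sum_sdiff_eq hT, sum_sdiff_eq hT]
    congr 1
    refine Finset.sum_congr rfl fun i hi => ?_
    obtain ⟨U, -, -, h⟩ := filter_dim (mem_max.1 hT).1 (mem_sdiff.1 hi).1
    simp only [hx]
    rw [h]; simp
  have e2 : ∑ T ∈ maxFacesAbove F d S s, ∑ U ∈ T \ s, g U ^ 2 = ∑ i ∈ I, Q i := by
    rw [Finset.sum_congr rfl fun T hT => sum_sdiff_eq hT _, Finset.sum_comm]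
  rw [Finset.sum_congr rfl e1, e2, Finset.sum_comm]
  have e3 : ∀ i ∈ I, ∑ T ∈ maxFacesAbove F d S s, ∑ j ∈ I.erase i, x T i * x T j ≤
      ∑ j ∈ I.erase i, ρ ^ ((j - i) + (i - j)) / 2 * (Q i + Q j) := by
    intro i hi
    rw [Finset.sum_comm]
    refine Finset.sum_le_sum fun j hj => ?_
    rw [mem_erase] at hj
    rcases Nat.lt_or_ge i j with h | h
    · rw [show (j - i) + (i - j) = j - i by omega]
      exact pair_bound hS hs (mem_sdiff.1 hi).1 (mem_sdiff.1 hj.2).1 h ρ hρ hρ2 g (hg i hi)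
    · rw [show (j - i) + (i - j) = i - j by omega, add_comm]
      refine le_trans (le_of_eq ?_) (pair_bound hS hs (mem_sdiff.1 hj.2).1 (mem_sdiff.1 hi).1
        (by omega) ρ hρ hρ2 g (hg j hj.2))
      exact Finset.sum_congr rfl fun T _ => mul_comm _ _
  refine (Finset.sum_le_sum e3).trans ?_
  have e4 : ∑ i ∈ I, ∑ j ∈ I.erase i, ρ ^ ((j - i) + (i - j)) / 2 * (Q i + Q j) =
      ∑ i ∈ I, (∑ j ∈ I.erase i, ρ ^ ((j - i) + (i - j))) * Q i := by
    have e5 : ∑ i ∈ I, ∑ j ∈ I.erase i, ρ ^ ((j - i) + (i - j)) / 2 * Q j =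
        ∑ i ∈ I, ∑ j ∈ I.erase i, ρ ^ ((j - i) + (i - j)) / 2 * Q i := by
      rw [Finset.sum_comm' (t' := I) (s' := fun j => I.erase j)]
      · refine Finset.sum_congr rfl fun i _ => Finset.sum_congr rfl fun j _ => ?_
        rw [add_comm (i - j)]
      · intro a b
        simp only [mem_erase]
        tauto
    simp only [mul_add, Finset.sum_add_distrib]
    rw [e5, ← Finset.sum_add_distrib]
    refine Finset.sum_congr rfl fun i _ => ?_
    rw [← Finset.sum_add_distrib, Finset.sum_mul]
    refine Finset.sum_congr rfl fun j _ => ?_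
    ring
  rw [e4, Finset.mul_sum]
  exact Finset.sum_le_sum fun i _ =>
    mul_le_mul_of_nonneg_right (row_sum I i ρ hρ hρ1) (hQ0 i)

end FlagAux

open FlagAux in
/-- Spectral expansion of the links of the projected flags complex:
the underlying weighted graph of the link of any face `s` of codimension at least `2`
has normalized second eigenvalue at most `2/((|S|-|s|-1)(√q-1))`, stated in
Rayleigh-quotient form. -/
theorem stmt_1 (q : ℕ) (hq : IsPrimePow q)
    (F : Type) [Field F] [Fintype F] (hF : Fintype.card F = q)
    (d : ℕ) (hd : 3 ≤ d)
    (S : Finset ℕ) (hS : S ⊆ Finset.Icc 1 (d - 1)) (hScard : 2 ≤ S.card)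
    (s : Finset (Submodule F (Fin d → F))) (hs : IsFlagFace F d S s)
    (hcodim : s.card + 2 ≤ S.card)
    (f : Submodule F (Fin d → F) → ℝ)
    (hmean : linkVertExp F d S s f = 0) :
    linkPairExp F d S s f f ≤
      (2 / (((S.card : ℝ) - (s.card : ℝ) - 1) * (Real.sqrt (q : ℝ) - 1))) *
        linkVertExp F d S s (fun U => (f U) ^ 2) := by
  have hq1 : 1 < q := hq.one_lt
  have hSd : ∀ i ∈ S, i < d := fun i hi => by
    have := Finset.mem_Icc.1 (hS hi)
    omega
  set M := maxFacesAbove F d S s with hM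
  set k : ℝ := (S.card : ℝ) - (s.card : ℝ) with hk
  have hk2 : 2 ≤ k := by
    have : ((s.card + 2 : ℕ) : ℝ) ≤ S.card := by exact_mod_cast hcodim
    push_cast at this
    linarith
  have hcardT : ∀ T ∈ M, ((T \ s).card : ℝ) = k := fun T hT => card_sdiff_eq hT
  have hvert : ∀ h : Submodule F (Fin d → F) → ℝ, linkVertExp F d S s h =
      (∑ T ∈ M, ∑ U ∈ T \ s, h U) / k / M.card := by
    intro h
    unfold linkVertExp
    congr 1
    rw [Finset.sum_div]
    exact Finset.sum_congr rfl fun T hT => by rw [hcardT T hT]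
  have hpair : linkPairExp F d S s f f =
      (∑ T ∈ M, ((∑ U ∈ T \ s, f U) ^ 2 - ∑ U ∈ T \ s, f U ^ 2)) / (k * (k - 1)) / M.card := by
    unfold linkPairExp
    congr 1
    rw [Finset.sum_div]
    exact Finset.sum_congr rfl fun T hT => by rw [hcardT T hT, pair_eq]
  rw [hpair, hvert]
  rw [hvert] at hmean
  rcases M.card.eq_zero_or_pos with hM0 | hM0
  · rw [hM0]; simp
  have hMpos : (0 : ℝ) < M.card := by exact_mod_cast hM0
  have hsq : 1 < √(q : ℝ) := by
    rw [Real.lt_sqrt (by norm_num)]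
    have : (1 : ℝ) < q := by exact_mod_cast hq1
    linarith
  have hsum0 : ∑ T ∈ M, ∑ U ∈ T \ s, f U = 0 := by
    rcases div_eq_zero_iff.1 hmean with h | h
    · rcases div_eq_zero_iff.1 h with h | h
      · exact h
      · linarith
    · linarith
  -- centre on each part
  set c : ℕ → ℝ := fun i => (∑ x ∈ cx s i, f x) / (cx s i).card with hc
  set g : Submodule F (Fin d → F) → ℝ := fun U => f U - c (Module.finrank F U) with hg
  have hcx : ∀ i ∈ S, (0 : ℝ) < (cx s i).card := fun i hi => by
    exact_mod_cast cx_card_pos hs.1 (hSd i hi)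
  have hcmul : ∀ i ∈ S, ∑ x ∈ cx s i, f x = c i * (cx s i).card := fun i hi => by
    simp only [hc]
    rw [div_mul_cancel₀ _ (hcx i hi).ne']
  have hgcx : ∀ i, ∀ x ∈ cx s i, g x = f x - c i := fun i x hx => by
    simp only [hg]
    rw [(mem_cx.1 hx).1]
  have hgmean : ∀ i ∈ S \ dims s, ∑ x ∈ cx s i, g x = 0 := by
    intro i hi
    have hi' := (mem_sdiff.1 hi).1
    rw [Finset.sum_congr rfl (hgcx i), Finset.sum_sub_distrib, hcmul i hi', Finset.sum_const,
      nsmul_eq_mul]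
    ring
  have hswap : ∀ h : Submodule F (Fin d → F) → ℝ, ∑ T ∈ M, ∑ U ∈ T \ s, h U =
      ∑ i ∈ S \ dims s, Nm F d S (insert i (dims s)) * ∑ U ∈ cx s i, h U := by
    intro h
    rw [Finset.sum_congr rfl fun T hT => sum_sdiff_eq hT _, Finset.sum_comm]
    exact Finset.sum_congr rfl fun i hi => sum_max' hSd hs (mem_sdiff.1 hi).1 h
  have hcsum : ∑ i ∈ S \ dims s, c i = 0 := by
    rw [hswap] at hsum0
    have : ∑ i ∈ S \ dims s, (M.card : ℝ) * c i = 0 := by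
      rw [← hsum0]
      refine Finset.sum_congr rfl fun i hi => ?_
      have hi' := (mem_sdiff.1 hi).1
      rw [hcmul i hi', hM, Nm_eq hSd hs, Nm_rec hSd hs hi', ← Nc_eq hs.1 (hSd i hi')]
      ring
    rw [← Finset.mul_sum] at this
    exact (mul_eq_zero.1 this).resolve_left hMpos.ne'
  have hfg : ∀ T ∈ M, ∑ U ∈ T \ s, g U = ∑ U ∈ T \ s, f U := by
    intro T hT
    simp only [hg]
    rw [Finset.sum_sub_distrib, sum_sdiff_eq hT (fun U => c (Module.finrank F U))]
    have : ∑ i ∈ S \ dims s, ∑ U ∈ T.filter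
        (fun U : Submodule F (Fin d → F) => Module.finrank F U = i), c (Module.finrank F U) = 0 := by
      rw [← hcsum]
      refine Finset.sum_congr rfl fun i hi => ?_
      obtain ⟨U, -, hU, h⟩ := filter_dim (mem_max.1 hT).1 (mem_sdiff.1 hi).1
      rw [h, Finset.sum_singleton, hU]
    rw [this, sub_zero]
  have hsqle : ∑ T ∈ M, ∑ U ∈ T \ s, g U ^ 2 ≤ ∑ T ∈ M, ∑ U ∈ T \ s, f U ^ 2 := by
    rw [hswap, hswap]
    refine Finset.sum_le_sum fun i hi => mul_le_mul_of_nonneg_left ?_ (Nm_nonneg _ _)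
    have hi' := (mem_sdiff.1 hi).1
    have e : ∑ x ∈ cx s i, f x ^ 2 = ∑ x ∈ cx s i, g x ^ 2 + c i ^ 2 * (cx s i).card := by
      have e1 : ∀ x ∈ cx s i, f x ^ 2 = g x ^ 2 + 2 * c i * g x + c i ^ 2 := fun x hx => by
        rw [hgcx i x hx]; ring
      rw [Finset.sum_congr rfl e1, Finset.sum_add_distrib, Finset.sum_add_distrib,
        ← Finset.mul_sum, hgmean i hi, Finset.sum_const, nsmul_eq_mul]
      ring
    rw [e]
    have := hcx i hi'
    nlinarith [mul_nonneg (sq_nonneg (c i)) this.le]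
  have hcore := core hSd hs (√(q : ℝ))⁻¹ (by positivity) (inv_lt_one_of_one_lt₀ hsq)
    (by rw [inv_pow, Real.sq_sqrt (by positivity), hF]) g hgmean
  have hcoef : (√(q : ℝ))⁻¹ / (1 - (√(q : ℝ))⁻¹) = 1 / (√(q : ℝ) - 1) := by
    have h1 : √(q : ℝ) - 1 ≠ 0 := by linarith
    have h2 : √(q : ℝ) ≠ 0 := by linarith
    have h3 : 1 - (√(q : ℝ))⁻¹ ≠ 0 := by
      have := inv_lt_one_of_one_lt₀ hsq
      linarith
    rw [div_eq_div_iff h3 h1]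
    field_simp
  rw [hcoef, ← hM] at hcore
  set P := ∑ T ∈ M, ∑ U ∈ T \ s, f U ^ 2 with hP
  have hmain : ∑ T ∈ M, ((∑ U ∈ T \ s, f U) ^ 2 - ∑ U ∈ T \ s, f U ^ 2) ≤
      2 * (1 / (√(q : ℝ) - 1)) * P := by
    have h1 : 0 ≤ 2 * (1 / (√(q : ℝ) - 1)) := by
      have : 0 < √(q : ℝ) - 1 := by linarith
      positivity
    refine le_trans ?_ (hcore.trans (mul_le_mul_of_nonneg_left hsqle h1))
    have h2 : ∑ T ∈ M, (∑ U ∈ T \ s, g U) ^ 2 = ∑ T ∈ M, (∑ U ∈ T \ s, f U) ^ 2 :=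
      Finset.sum_congr rfl fun T hT => by rw [hfg T hT]
    rw [Finset.sum_sub_distrib, Finset.sum_sub_distrib, h2]
    linarith
  have hk1 : 0 < k - 1 := by linarith
  have hk0 : 0 < k := by linarith
  have hs1 : 0 < √(q : ℝ) - 1 := by linarith
  calc _ ≤ (2 * (1 / (√(q : ℝ) - 1)) * P) / (k * (k - 1)) / M.card := by gcongr
    _ = _ := by field_simp
end

section
/- Let F be a finite field, d ≥ 1 an integer, and fix a linear order ≤ on the set F^d. For F-linear subspaces M ⊆ N of F^d with c = dim(N) − dim(M), a saturated chain from M to N is a sequence M = W₀ ⊊ W₁ ⊊ ⋯ ⊊ W_c = N of subspaces with dim(W_i) = dim(M) + i for all i; its label is the tuple (v₁,…,v_c) where v_i is the ≤-least element of W_i ∖ W_{i−1}. Then: (i) there is exactly one saturated chain from M to N whose label is strictly increasing (v₁ < v₂ < ⋯ < v_c); and (ii) every other saturated chain from M to N has label strictly greater than the label of this chain in the lexicographic order. -/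
/-- A saturated chain from `M` to `N` (where `c = dim N - dim M`): a sequence
`M = W₀ ⊊ W₁ ⊊ ⋯ ⊊ W_c = N` with `dim W_i = dim M + i`. -/
def IsSatChain (F : Type) [Field F] [Fintype F] (d : ℕ)
    (M N : Submodule F (Fin d → F)) (c : ℕ)
    (W : Fin (c + 1) → Submodule F (Fin d → F)) : Prop :=
  W 0 = M ∧ W (Fin.last c) = N ∧
    (∀ i : Fin c, W i.castSucc < W i.succ) ∧
    ∀ i : Fin (c + 1), Module.finrank F (W i) = Module.finrank F M + (i : ℕ)

/-- `v` is the label of the saturated chain `W` with respect to the linear order `lo`: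
`v i` is the `lo`-least element of `W_{i+1} ∖ W_i`. -/
def IsLabelOf (F : Type) [Field F] [Fintype F] (d : ℕ) (lo : LinearOrder (Fin d → F)) (c : ℕ)
    (W : Fin (c + 1) → Submodule F (Fin d → F))
    (v : Fin c → (Fin d → F)) : Prop :=
  ∀ i : Fin c, v i ∈ W i.succ ∧ v i ∉ W i.castSucc ∧
    ∀ x : Fin d → F, x ∈ W i.succ → x ∉ W i.castSucc → lo.le (v i) x

/-- Strict lexicographic comparison of labels, with respect to the linear order `lo`. -/
def LexLt (F : Type) [Field F] [Fintype F] (d : ℕ) (lo : LinearOrder (Fin d → F)) (c : ℕ)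
    (v v' : Fin c → (Fin d → F)) : Prop :=
  ∃ i : Fin c, (∀ j : Fin c, j < i → v j = v' j) ∧ lo.lt (v i) (v' i)

theorem chain_step (F : Type) [Field F] [Fintype F] (d : ℕ)
    (P Q : Submodule F (Fin d → F)) (x : Fin d → F) (hPQ : P ≤ Q) (hx : x ∈ Q) (hxP : x ∉ P)
    (hr : Module.finrank F Q ≤ Module.finrank F P + 1) : P ⊔ Submodule.span F {x} = Q := by
  have hle : P ⊔ Submodule.span F {x} ≤ Q :=
    sup_le hPQ ((Submodule.span_singleton_le_iff_mem _ _).2 hx)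
  have hlt : P < P ⊔ Submodule.span F {x} := by
    refine lt_of_le_of_ne le_sup_left ?_
    intro h
    apply hxP
    rw [h]
    exact (le_sup_right : Submodule.span F {x} ≤ _) (Submodule.mem_span_singleton_self x)
  have := Submodule.finrank_lt_finrank_of_lt hlt
  exact Submodule.eq_of_le_of_finrank_le hle (by omega)

theorem finrank_step (F : Type) [Field F] [Fintype F] (d : ℕ)
    (P : Submodule F (Fin d → F)) (x : Fin d → F) (hxP : x ∉ P) :
    Module.finrank F (P ⊔ Submodule.span F {x} : Submodule F (Fin d → F))
      = Module.finrank F P + 1 := by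
  have hlt : P < P ⊔ Submodule.span F {x} := by
    refine lt_of_le_of_ne le_sup_left ?_
    intro h
    apply hxP
    rw [h]
    exact (le_sup_right : Submodule.span F {x} ≤ _) (Submodule.mem_span_singleton_self x)
  have h1 := Submodule.finrank_lt_finrank_of_lt hlt
  have h2 := Submodule.finrank_add_le_finrank_add_finrank P (Submodule.span F {x})
  have h3 : Module.finrank F (Submodule.span F {x}) ≤ 1 := by
    simpa using finrank_span_le_card (R := F) ({x} : Set (Fin d → F))
  omega

theorem chain_agree (F : Type) [Field F] [Fintype F] (d : ℕ) (lo : LinearOrder (Fin d → F))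
    (M N : Submodule F (Fin d → F)) (c : ℕ)
    (W W' : Fin (c + 1) → Submodule F (Fin d → F)) (v v' : Fin c → (Fin d → F))
    (hW : IsSatChain F d M N c W) (hW' : IsSatChain F d M N c W')
    (hv : IsLabelOf F d lo c W v) (hv' : IsLabelOf F d lo c W' v') (k : Fin (c + 1)) :
    (∀ j : Fin c, j.castSucc < k → v j = v' j) → W k = W' k := by
  induction k using Fin.induction with
  | zero => intro _; rw [hW.1, hW'.1]
  | succ i ih =>
    intro h
    have e := ih (fun j hj => h j (hj.trans i.castSucc_lt_succ))
    have hvi := h i i.castSucc_lt_succ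
    rw [← chain_step F d _ _ _ (hW.2.2.1 i).le (hv i).1 (hv i).2.1
        (by rw [hW.2.2.2, hW.2.2.2]; simp; omega),
      ← chain_step F d _ _ _ (hW'.2.2.1 i).le (hv' i).1 (hv' i).2.1
        (by rw [hW'.2.2.2, hW'.2.2.2]; simp; omega), e, hvi]

theorem chain_mono (F : Type) [Field F] [Fintype F] (d : ℕ)
    (M N : Submodule F (Fin d → F)) (c : ℕ)
    (W : Fin (c + 1) → Submodule F (Fin d → F))
    (hW : IsSatChain F d M N c W) : Monotone W :=
  Fin.monotone_iff_le_succ.2 (fun i => (hW.2.2.1 i).le)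

theorem chain_jump (F : Type) [Field F] [Fintype F] (d : ℕ)
    (M N : Submodule F (Fin d → F)) (c : ℕ)
    (W : Fin (c + 1) → Submodule F (Fin d → F))
    (hW : IsSatChain F d M N c W) (i : Fin c) (x : Fin d → F) (hx : x ∈ N)
    (hxi : x ∉ W i.castSucc) : ∃ j : Fin c, i ≤ j ∧ x ∈ W j.succ ∧ x ∉ W j.castSucc := by
  have key : ∀ k : Fin (c + 1), x ∈ W k → ∃ j : Fin c, x ∈ W j.succ ∧ x ∉ W j.castSucc := by
    intro k
    induction k using Fin.induction with
    | zero =>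
      intro h
      exact absurd (chain_mono F d M N c W hW (Fin.zero_le _) h) hxi
    | succ i ih =>
      intro h
      by_cases h' : x ∈ W i.castSucc
      · exact ih h'
      · exact ⟨i, h, h'⟩
  obtain ⟨j, h1, h2⟩ := key (Fin.last c) (by rw [hW.2.1]; exact hx)
  refine ⟨j, ?_, h1, h2⟩
  by_contra hlt
  push Not at hlt
  exact hxi (chain_mono F d M N c W hW (Fin.succ_le_castSucc_iff.2 hlt) h1)

/-- For subspaces `M ⊆ N` of `F^d` and `c = dim N - dim M`, there is exactly
one saturated chain from `M` to `N` whose label is strictly increasing, and every other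
saturated chain from `M` to `N` has a lexicographically strictly greater label. -/
theorem stmt_3 (F : Type) [Field F] [Fintype F] (d : ℕ) (hd : 1 ≤ d)
    (lo : LinearOrder (Fin d → F))
    (M N : Submodule F (Fin d → F)) (hMN : M ≤ N)
    (c : ℕ) (hc : c = Module.finrank F N - Module.finrank F M) :
    ∃ (W₀ : Fin (c + 1) → Submodule F (Fin d → F)) (v₀ : Fin c → (Fin d → F)),
      IsSatChain F d M N c W₀ ∧ IsLabelOf F d lo c W₀ v₀ ∧
      (∀ i j : Fin c, i < j → lo.lt (v₀ i) (v₀ j)) ∧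
      (∀ W : Fin (c + 1) → Submodule F (Fin d → F), IsSatChain F d M N c W →
        (∃ v : Fin c → (Fin d → F), IsLabelOf F d lo c W v ∧
          ∀ i j : Fin c, i < j → lo.lt (v i) (v j)) → W = W₀) ∧
      (∀ (W : Fin (c + 1) → Submodule F (Fin d → F)) (v : Fin c → (Fin d → F)),
        IsSatChain F d M N c W → IsLabelOf F d lo c W v → W ≠ W₀ →
        LexLt F d lo c v₀ v) := by
  classical
  have hf : ∀ P : Submodule F (Fin d → F), ∃ x : Fin d → F, x ∈ N ∧
      (P < N → x ∉ P ∧ ∀ y, y ∈ N → y ∉ P → lo.le x y) := by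
    intro P
    by_cases h : P < N
    · obtain ⟨z, hz, hzP⟩ := SetLike.exists_of_lt h
      obtain ⟨x, hx, hmin⟩ := @Set.exists_min_image (Fin d → F) (Fin d → F) lo
        {x | x ∈ N ∧ x ∉ P} id (Set.toFinite _) ⟨z, hz, hzP⟩
      exact ⟨x, hx.1, fun _ => ⟨hx.2, fun y h1 h2 => hmin y ⟨h1, h2⟩⟩⟩
    · exact ⟨0, N.zero_mem, fun h' => absurd h' h⟩
  choose f hfN hfP using hf
  obtain ⟨U, hU0, hUs⟩ : ∃ U : ℕ → Submodule F (Fin d → F), U 0 = M ∧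
      ∀ n, U (n + 1) = U n ⊔ Submodule.span F {f (U n)} :=
    ⟨fun n => Nat.rec (motive := fun _ => Submodule F (Fin d → F)) M
      (fun _ P => P ⊔ Submodule.span F {f P}) n, rfl, fun _ => rfl⟩
  have hUN : ∀ n, U n ≤ N := by
    intro n
    induction n with
    | zero => rw [hU0]; exact hMN
    | succ n ih =>
      rw [hUs]
      exact sup_le ih ((Submodule.span_singleton_le_iff_mem _ _).2 (hfN _))
  have hMNr := Submodule.finrank_mono hMN
  have hlt' : ∀ n : ℕ, n < c → Module.finrank F ↥(U n) = Module.finrank F M + n → U n < N := by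
    intro n hn h
    refine lt_of_le_of_ne (hUN n) ?_
    intro e
    rw [e] at h
    omega
  have hUr : ∀ n : ℕ, n ≤ c → Module.finrank F ↥(U n) = Module.finrank F M + n := by
    intro n
    induction n with
    | zero => intro _; rw [hU0]; rfl
    | succ n ih =>
      intro hn
      have h := ih (by omega)
      rw [hUs, finrank_step F d _ _ (hfP _ (hlt' n (by omega) h)).1, h]
      omega
  have hUlt : ∀ n : ℕ, n < c → U n < N := fun n hn => hlt' n hn (hUr n hn.le)
  have hUmono : Monotone U := monotone_nat_of_le_succ (fun n => by rw [hUs]; exact le_sup_left)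
  have hfU : ∀ n, f (U n) ∈ U (n + 1) := by
    intro n
    rw [hUs]
    exact (le_sup_right : Submodule.span F {f (U n)} ≤ _) (Submodule.mem_span_singleton_self _)
  have hchain : IsSatChain F d M N c (fun i => U i) := by
    refine ⟨hU0, ?_, ?_, ?_⟩
    · refine Submodule.eq_of_le_of_finrank_le (hUN _) ?_
      simp only [Fin.val_last]
      rw [hUr c le_rfl]
      omega
    · intro i
      refine lt_of_le_of_ne (hUmono (by simp)) ?_
      intro e
      have h := (hfP _ (hUlt i i.2)).1
      apply h
      have h2 := hfU i
      simp only [Fin.val_castSucc, Fin.val_succ] at e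
      rw [e]
      rw [← e]
      rw [← e] at h2
      exact h2
    · intro i
      exact hUr i (by omega)
  have hlab : IsLabelOf F d lo c (fun i => U i) (fun i => f (U i)) := by
    intro i
    refine ⟨hfU i, (hfP _ (hUlt i i.2)).1, ?_⟩
    intro x hx hx'
    exact (hfP _ (hUlt i i.2)).2 x (hUN _ hx) hx'
  have hlex : ∀ (W : Fin (c + 1) → Submodule F (Fin d → F)) (v : Fin c → (Fin d → F)),
        IsSatChain F d M N c W → IsLabelOf F d lo c W v → W ≠ (fun i : Fin (c + 1) => U i) →
        LexLt F d lo c (fun i => f (U i)) v := by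
    intro W v hW hv hne
    have hex : ∃ n : ℕ, ∃ h : n < c, f (U n) ≠ v ⟨n, h⟩ := by
      by_contra hcon
      push Not at hcon
      apply hne
      funext k
      exact chain_agree F d lo M N c _ _ _ _ hW hchain hv hlab k
        (fun j _ => (hcon j j.2).symm)
    obtain ⟨hn, hneq⟩ := Nat.find_spec hex
    have hmin : ∀ j : Fin c, (j : ℕ) < Nat.find hex → f (U j) = v j := by
      intro j hj
      by_contra hcon
      exact Nat.find_min hex hj ⟨j.2, hcon⟩
    refine ⟨⟨Nat.find hex, hn⟩, fun j hj => hmin j hj, ?_⟩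
    refine @lt_of_le_of_ne _ lo.toPartialOrder _ _ ?_ hneq
    have e := chain_agree F d lo M N c _ _ _ _ hW hchain hv hlab
      (Fin.castSucc ⟨Nat.find hex, hn⟩) (fun j hj => (hmin j hj).symm)
    have hvi := hv ⟨Nat.find hex, hn⟩
    refine (hfP _ (hUlt _ hn)).2 _ ?_ ?_
    · rw [← hW.2.1]
      exact chain_mono F d M N c W hW (Fin.le_last _) hvi.1
    · have h2 := hvi.2.1
      rw [e] at h2
      exact h2
  refine ⟨fun i => U i, fun i => f (U i), hchain, hlab, ?_, ?_, hlex⟩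
  · intro i j hij
    have hj := hfP _ (hUlt j j.2)
    have hi := hfP _ (hUlt i i.2)
    refine @lt_of_le_of_ne _ lo.toPartialOrder _ _ (hi.2 _ (hfN _) ?_) ?_
    · exact fun h => hj.1 (hUmono (le_of_lt hij) h)
    · intro e
      apply hj.1
      change f (U i) = f (U j) at e
      rw [← e]
      exact hUmono (Nat.succ_le_of_lt hij) (hfU i)
  · rintro W hW ⟨v, hv, hinc⟩
    by_contra hne
    obtain ⟨i, hlti, hi⟩ := hlex W v hW hv hne
    have e := chain_agree F d lo M N c _ _ _ _ hW hchain hv hlab i.castSucc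
      (fun j hj => (hlti j hj).symm)
    obtain ⟨j, hij, h1, h2⟩ := chain_jump F d M N c W hW i (f (U i)) (hfN _)
      (by rw [e]; exact (hfP _ (hUlt i i.2)).1)
    have hle : lo.le (v j) (f (U i)) := (hv j).2.2 _ h1 h2
    have hlt2 : lo.lt (v j) (v i) := @lt_of_le_of_lt _ lo.toPreorder _ _ _ hle hi
    rcases hij.eq_or_lt with h | h
    · subst h
      exact @lt_irrefl _ lo.toPreorder _ hlt2
    · exact @lt_asymm _ lo.toPreorder _ _ hlt2 (hinc i j h)
end

section
/- Let F be a finite field and d ≥ 1 an integer. Consider the poset of all F-linear subspaces of F^d ordered by inclusion; it is pure, its maximal chains being the complete flags 0 = V₀ ⊊ V₁ ⊊ ⋯ ⊊ V_d = F^d with dim(V_i) = i. Then this poset is shellable: its maximal chains (regarded as sets of subspaces) admit an enumeration m₁, m₂, …, m_t such that for all 1 ≤ i < j ≤ t there exist 1 ≤ k < j and x ∈ m_j with m_i ∩ m_j ⊆ m_k ∩ m_j = m_j ∖ {x}. -/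
open scoped Classical

namespace FlagShell

variable {F : Type} [Field F] [Fintype F] {d : ℕ}

/-- Complete flags indexed by `ℕ`, constantly `⊤` from `d` on. -/
def IsFlag (f : ℕ → Submodule F (Fin d → F)) : Prop :=
  Monotone f ∧ ∀ i, Module.finrank F (f i) = min i d

/-- The label of a pair of subspaces. -/
noncomputable def lab (e : (Fin d → F) → ℕ) (V W : Submodule F (Fin d → F)) : ℕ :=
  sInf {n | ∃ v ∈ W, v ∉ V ∧ e v = n}

lemma lab_le (e : (Fin d → F) → ℕ) {V W : Submodule F (Fin d → F)} {v : Fin d → F}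
    (h1 : v ∈ W) (h2 : v ∉ V) : lab e V W ≤ e v :=
  Nat.sInf_le ⟨v, h1, h2, rfl⟩

lemma lab_mem (e : (Fin d → F) → ℕ) {V W : Submodule F (Fin d → F)} (h : V < W) :
    ∃ v ∈ W, v ∉ V ∧ e v = lab e V W := by
  obtain ⟨v, h1, h2⟩ := SetLike.exists_of_lt h
  exact Nat.sInf_mem (s := {n | ∃ v ∈ W, v ∉ V ∧ e v = n}) ⟨e v, v, h1, h2, rfl⟩

lemma lab_self (e : (Fin d → F) → ℕ) (V : Submodule F (Fin d → F)) : lab e V V = 0 := by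
  have : {n | ∃ v ∈ V, v ∉ V ∧ e v = n} = ∅ := by
    ext n; simp only [Set.mem_ofPred_eq, Set.mem_empty_iff_false, iff_false]
    rintro ⟨v, h1, h2, _⟩; exact h2 h1
  simp [lab, this]

lemma finrank_sup_span {V : Submodule F (Fin d → F)} {v : Fin d → F} (h : v ∉ V) :
    Module.finrank F (V ⊔ F ∙ v : Submodule F (Fin d → F)) = Module.finrank F V + 1 := by
  have hv : v ≠ 0 := by rintro rfl; exact h V.zero_mem
  have h1 := Submodule.finrank_sup_add_finrank_inf_eq V (F ∙ v)
  have h2 : V ⊓ F ∙ v = ⊥ := by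
    rw [← disjoint_iff, Submodule.disjoint_span_singleton' hv]; exact h
  rw [h2, finrank_bot, finrank_span_singleton hv] at h1
  exact h1

lemma eq_of_comp {V W : Submodule F (Fin d → F)} (h : V ≤ W ∨ W ≤ V)
    (hr : Module.finrank F V = Module.finrank F W) : V = W := by
  rcases h with h | h
  · exact Submodule.eq_of_le_of_finrank_eq h hr
  · exact (Submodule.eq_of_le_of_finrank_eq h hr.symm).symm

lemma IsFlag.top {f : ℕ → Submodule F (Fin d → F)} (hf : IsFlag f) {i : ℕ} (hi : d ≤ i) :
    f i = ⊤ := by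
  apply Submodule.eq_top_of_finrank_eq
  rw [hf.2]; simp [hi]

lemma IsFlag.zero {f : ℕ → Submodule F (Fin d → F)} (hf : IsFlag f) : f 0 = ⊥ := by
  apply Submodule.finrank_eq_zero.1
  rw [hf.2]; simp

lemma IsFlag.lt {f : ℕ → Submodule F (Fin d → F)} (hf : IsFlag f) {i : ℕ} (hi : i < d) :
    f i < f (i + 1) := by
  refine lt_of_le_of_ne (hf.1 (Nat.le_succ i)) fun h => ?_
  have h1 := hf.2 i
  have h2 := hf.2 (i + 1)
  rw [h] at h1
  omega

lemma IsFlag.step {f : ℕ → Submodule F (Fin d → F)} (hf : IsFlag f) {i : ℕ} (hi : i < d)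
    {v : Fin d → F} (h1 : v ∈ f (i + 1)) (h2 : v ∉ f i) : f i ⊔ F ∙ v = f (i + 1) := by
  apply eq_of_comp
  · left
    exact sup_le (hf.1 (Nat.le_succ i)) ((Submodule.span_singleton_le_iff_mem _ _).2 h1)
  · rw [finrank_sup_span h2, hf.2, hf.2]; omega

lemma IsFlag.eq_of_mem {f g : ℕ → Submodule F (Fin d → F)} (hf : IsFlag f) (hg : IsFlag g)
    {i j : ℕ} (h : f i = g j) : f i = g i := by
  have h1 := hf.2 i
  have h2 := hg.2 j
  have h3 := hg.2 i
  rw [h]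
  rw [h] at h1
  exact eq_of_comp ((le_total j i).imp (fun h => hg.1 h) (fun h => hg.1 h)) (h1.trans h3.symm)

lemma eq_succ {e : (Fin d → F) → ℕ} (he : Function.Injective e)
    {f g : ℕ → Submodule F (Fin d → F)} (hf : IsFlag f) (hg : IsFlag g) {i : ℕ}
    (h : f i = g i) (hl : lab e (f i) (f (i + 1)) = lab e (g i) (g (i + 1))) :
    f (i + 1) = g (i + 1) := by
  by_cases hi : i < d
  · obtain ⟨v, v1, v2, v3⟩ := lab_mem e (hf.lt hi)
    obtain ⟨w, w1, w2, w3⟩ := lab_mem e (hg.lt hi)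
    have : v = w := he (by rw [v3, w3, hl])
    subst this
    rw [← hf.step hi v1 v2, ← hg.step hi w1 w2, h]
  · rw [hf.top (by omega), hg.top (by omega)]

lemma eq_upto {e : (Fin d → F) → ℕ} (he : Function.Injective e)
    {f g : ℕ → Submodule F (Fin d → F)} (hf : IsFlag f) (hg : IsFlag g) (n : ℕ)
    (hl : ∀ i < n, lab e (f i) (f (i + 1)) = lab e (g i) (g (i + 1))) :
    ∀ i ≤ n, f i = g i := by
  intro i
  induction i with
  | zero => intro _; rw [hf.zero, hg.zero]
  | succ i ih => intro hi; exact eq_succ he hf hg (ih (by omega)) (hl i (by omega))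

lemma exists_descent {e : (Fin d → F) → ℕ} (he : Function.Injective e)
    {f g : ℕ → Submodule F (Fin d → F)} (hf : IsFlag f) (hg : IsFlag g) (n : ℕ)
    (hl : ∀ i < n, lab e (f i) (f (i + 1)) = lab e (g i) (g (i + 1)))
    (hn : lab e (f n) (f (n + 1)) < lab e (g n) (g (n + 1))) :
    ∃ p, p + 1 < d ∧ f (p + 1) ≠ g (p + 1) ∧
      lab e (g (p + 1)) (g (p + 2)) < lab e (g p) (g (p + 1)) := by
  have hnd : n < d := by
    by_contra hc
    rw [hg.top (i := n) (by omega), hg.top (i := n + 1) (by omega), lab_self] at hn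
    omega
  have hfg := eq_upto he hf hg n hl n le_rfl
  obtain ⟨a, a1, a2, a3⟩ := lab_mem e (hf.lt hnd)
  by_contra! hcon
  have key : ∀ r, n ≤ r → a ∉ g r ∧ lab e (g n) (g (n + 1)) ≤ lab e (g r) (g (r + 1)) := by
    intro r hr
    induction r, hr using Nat.le_induction with
    | base => exact ⟨hfg ▸ a2, le_rfl⟩
    | succ r hr ih =>
      have h1 : a ∉ g (r + 1) := by
        intro h
        have := lab_le e h ih.1
        omega
      refine ⟨h1, ih.2.trans (hcon r ?_ ?_)⟩
      · by_contra hc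
        rw [hg.top (by omega)] at h1
        exact h1 trivial
      · intro h
        exact h1 (h ▸ hf.1 (by omega) a1)
  have := (key d hnd.le).1
  rw [hg.top le_rfl] at this
  exact this trivial

lemma exists_swap (e : (Fin d → F) → ℕ)
    {g : ℕ → Submodule F (Fin d → F)} (hg : IsFlag g) {p : ℕ} (hp : p + 1 < d)
    (hlt : lab e (g (p + 1)) (g (p + 2)) < lab e (g p) (g (p + 1))) :
    ∃ h : ℕ → Submodule F (Fin d → F), IsFlag h ∧ (∀ q, q ≠ p + 1 → h q = g q) ∧
      h (p + 1) ≠ g (p + 1) ∧ lab e (h p) (h (p + 1)) < lab e (g p) (g (p + 1)) := by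
  obtain ⟨b, b1, b2, b3⟩ := lab_mem e (hg.lt hp)
  have b4 : b ∉ g p := fun h => b2 (hg.1 (Nat.le_succ p) h)
  have hb : b ∈ g p ⊔ F ∙ b :=
    (le_sup_right : F ∙ b ≤ g p ⊔ F ∙ b) (Submodule.mem_span_singleton_self b)
  have hne : ∀ q, q ≠ p + 1 → Function.update g (p + 1) (g p ⊔ F ∙ b) q = g q :=
    fun q hq => Function.update_of_ne hq _ _
  have heq : Function.update g (p + 1) (g p ⊔ F ∙ b) (p + 1) = g p ⊔ F ∙ b :=
    Function.update_self _ _ _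
  refine ⟨Function.update g (p + 1) (g p ⊔ F ∙ b), ⟨?_, ?_⟩, hne, ?_, ?_⟩
  · apply monotone_nat_of_le_succ
    intro q
    by_cases h1 : q = p + 1
    · subst h1
      rw [heq, hne _ (by omega)]
      exact sup_le (hg.1 (by omega)) ((Submodule.span_singleton_le_iff_mem _ _).2 b1)
    · by_cases h2 : q = p
      · subst h2
        rw [heq, hne _ (by omega)]
        exact le_sup_left
      · rw [hne _ h1, hne _ (by omega)]
        exact hg.1 (Nat.le_succ q)
  · intro q
    by_cases h1 : q = p + 1
    · subst h1
      rw [heq, finrank_sup_span b4, hg.2]; omega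
    · rw [hne _ h1, hg.2]
  · rw [heq]
    intro h
    exact b2 (h ▸ hb)
  · rw [heq, hne _ (by omega)]
    exact (lab_le e hb b4).trans_lt (b3 ▸ hlt)

lemma finrank_le_d (w : Submodule F (Fin d → F)) : Module.finrank F w ≤ d := by
  simpa using Submodule.finrank_le w

lemma IsFlag.isMaxChain {f : ℕ → Submodule F (Fin d → F)} (hf : IsFlag f) :
    IsMaxChain (· ≤ ·) (Set.range f) := by
  constructor
  · rintro _ ⟨i, rfl⟩ _ ⟨j, rfl⟩ _
    exact (le_total i j).imp (fun h => hf.1 h) (fun h => hf.1 h)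
  · intro t ht hst
    apply Set.Subset.antisymm hst
    intro w hw
    refine ⟨Module.finrank F w, eq_of_comp (ht.total (hst ⟨_, rfl⟩) hw) ?_⟩
    rw [hf.2, min_eq_left (finrank_le_d w)]

lemma exists_rank {c : Set (Submodule F (Fin d → F))} (hc : IsMaxChain (· ≤ ·) c) (i : ℕ)
    (hi : i ≤ d) : ∃ x ∈ c, Module.finrank F x = i := by
  have hmem : ∀ z, (∀ w ∈ c, z ≤ w ∨ w ≤ z) → z ∈ c := by
    intro z hz
    have h1 : IsChain (· ≤ ·) (insert z c) := hc.1.insert fun w hw _ => hz w hw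
    rw [hc.2 h1 (Set.subset_insert _ _)]
    exact Set.mem_insert _ _
  induction i with
  | zero => exact ⟨⊥, hmem _ fun w _ => Or.inl bot_le, finrank_bot F _⟩
  | succ i ih =>
    obtain ⟨x, hx, hxr⟩ := ih (by omega)
    have htop : (⊤ : Submodule F (Fin d → F)) ∈ c := hmem _ fun w _ => Or.inr le_top
    have hxt : x < ⊤ := by
      rw [lt_top_iff_ne_top]
      rintro rfl
      rw [finrank_top, Module.finrank_fin_fun] at hxr
      omega
    obtain ⟨y, ⟨hy, hxy⟩, hmin⟩ := wellFounded_lt.has_min {y | y ∈ c ∧ x < y} ⟨⊤, htop, hxt⟩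
    obtain ⟨v, v1, v2⟩ := SetLike.exists_of_lt hxy
    refine ⟨x ⊔ F ∙ v, hmem _ ?_, by rw [finrank_sup_span v2, hxr]⟩
    intro w hw
    by_cases hwx : w ≤ x
    · exact Or.inr (hwx.trans le_sup_left)
    · have hxw : x < w := lt_of_le_not_ge ((hc.1.total hx hw).resolve_right hwx) hwx
      have hyw : y ≤ w := by
        rcases hc.1.total hy hw with h | h
        · exact h
        · by_contra hn
          exact hmin w ⟨hw, hxw⟩ (lt_of_le_not_ge h hn)
      left
      exact (sup_le hxy.le ((Submodule.span_singleton_le_iff_mem _ _).2 v1)).trans hyw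

lemma exists_flag {c : Set (Submodule F (Fin d → F))} (hc : IsMaxChain (· ≤ ·) c) :
    ∃ f : ℕ → Submodule F (Fin d → F), IsFlag f ∧ Set.range f = c := by
  have h : ∀ i, ∃ x ∈ c, Module.finrank F x = min i d := fun i =>
    exists_rank hc _ (min_le_right _ _)
  choose f hf hr using h
  refine ⟨f, ⟨?_, hr⟩, ?_⟩
  · apply monotone_nat_of_le_succ
    intro i
    rcases hc.1.total (hf i) (hf (i + 1)) with h | h
    · exact h
    · refine (Submodule.eq_of_le_of_finrank_le h ?_).ge
      rw [hr, hr]; omega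
  · ext w
    constructor
    · rintro ⟨i, rfl⟩; exact hf i
    · intro hw
      refine ⟨Module.finrank F w, eq_of_comp (hc.1.total (hf _) hw) ?_⟩
      rw [hr, min_eq_left (finrank_le_d w)]

lemma exists_enum {α L : Type} [Finite α] [LinearOrder L] (key : α → L)
    (hk : Function.Injective key) :
    ∃ (t : ℕ) (m : Fin t ≃ α), ∀ i j, i < j ↔ key (m i) < key (m j) := by
  letI := Fintype.ofFinite α
  letI : LinearOrder α := LinearOrder.lift' key hk
  refine ⟨Fintype.card α, (Fintype.orderIsoFinOfCardEq α rfl).toEquiv, fun i j => ?_⟩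
  exact ((Fintype.orderIsoFinOfCardEq α rfl).lt_iff_lt (x := i) (y := j)).symm

end FlagShell

open FlagShell in
/-- The poset of all `F`-linear subspaces of `F^d`, ordered by inclusion,
is shellable: its maximal chains (regarded as finite sets of subspaces) admit an enumeration
`m 0, m 1, …` such that for all `i < j` there exist `k < j` and `x ∈ m j` with
`m i ∩ m j ⊆ m k ∩ m j = m j \ {x}`. -/
theorem stmt_4 (F : Type) [Field F] [Fintype F] (d : ℕ) (hd : 1 ≤ d) :
    ∃ (t : ℕ) (m : Fin t → Finset (Submodule F (Fin d → F))),
      (∀ j : Fin t, IsMaxChain (· ≤ ·) ((m j : Finset (Submodule F (Fin d → F))) : Set (Submodule F (Fin d → F)))) ∧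
      (∀ c : Finset (Submodule F (Fin d → F)),
        IsMaxChain (· ≤ ·) (c : Set (Submodule F (Fin d → F))) → ∃! j : Fin t, m j = c) ∧
      ∀ i j : Fin t, i < j → ∃ k : Fin t, k < j ∧ ∃ x ∈ m j,
        m i ∩ m j ⊆ m k ∩ m j ∧ m k ∩ m j = (m j).erase x := by
  haveI : Finite (Submodule F (Fin d → F)) :=
    Finite.of_injective (fun V : Submodule F (Fin d → F) => (V : Set (Fin d → F)))
      SetLike.coe_injective
  obtain ⟨e, he⟩ := Countable.exists_injective_nat (Fin d → F)
  let α := {c : Finset (Submodule F (Fin d → F)) //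
    IsMaxChain (· ≤ ·) (c : Set (Submodule F (Fin d → F)))}
  have hα : ∀ c : α, ∃ f : ℕ → Submodule F (Fin d → F), IsFlag f ∧
      Set.range f = (c.1 : Set (Submodule F (Fin d → F))) := fun c => exists_flag c.2
  choose fl hfl hrange using hα
  have hmem : ∀ (c : α) x, x ∈ c.1 ↔ ∃ i, fl c i = x := by
    intro c x
    rw [← Finset.mem_coe, ← hrange c]; rfl
  let key : α → Lex (ℕ → ℕ) := fun c => toLex fun i => lab e (fl c i) (fl c (i + 1))
  have hinj : Function.Injective key := by
    intro c c' h
    have h1 : ∀ i, lab e (fl c i) (fl c (i + 1)) = lab e (fl c' i) (fl c' (i + 1)) :=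
      fun i => congrFun (toLex.injective h) i
    have h2 : fl c = fl c' := by
      funext i
      exact eq_upto he (hfl c) (hfl c') i (fun j _ => h1 j) i le_rfl
    apply Subtype.ext
    apply Finset.coe_injective
    rw [← hrange c, ← hrange c', h2]
  obtain ⟨t, m, hm⟩ := exists_enum key hinj
  refine ⟨t, fun j => (m j).1, fun j => (m j).2, ?_, ?_⟩
  · intro c hc
    refine ⟨m.symm ⟨c, hc⟩, by simp, ?_⟩
    intro j hj
    rw [Equiv.eq_symm_apply]
    exact Subtype.ext hj
  · intro i j hij
    obtain ⟨n, hn1, hn2⟩ := (hm i j).1 hij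
    obtain ⟨p, hp, hne, hdesc⟩ := exists_descent he (hfl (m i)) (hfl (m j)) n hn1 hn2
    obtain ⟨h, hh, hq, hhne, hlab⟩ := exists_swap e (hfl (m j)) hp hdesc
    have hfin : (Set.range h).Finite := Set.toFinite _
    let c : α := ⟨hfin.toFinset, by rw [hfin.coe_toFinset]; exact hh.isMaxChain⟩
    have hc : fl c = h := by
      funext q
      have h1 : fl c q ∈ Set.range h := by
        rw [← hfin.coe_toFinset]
        exact (hmem c _).2 ⟨q, rfl⟩
      obtain ⟨r, hr⟩ := h1
      exact (hfl c).eq_of_mem hh hr.symm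
    have hkey : key c < key (m j) := by
      refine ⟨p, fun q hqp => ?_, ?_⟩
      · change lab e (fl c q) (fl c (q + 1)) = lab e (fl (m j) q) (fl (m j) (q + 1))
        rw [hc, hq q (by omega), hq (q + 1) (by omega)]
      · change lab e (fl c p) (fl c (p + 1)) < lab e (fl (m j) p) (fl (m j) (p + 1))
        rw [hc]; exact hlab
    have hidx : ∀ f g : ℕ → Submodule F (Fin d → F), IsFlag f → IsFlag g → ∀ q,
        f q = g (p + 1) → q = p + 1 := by
      intro f g hf hg q hfg
      have h1 := hf.2 q
      rw [hfg, hg.2] at h1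
      omega
    refine ⟨m.symm c, (hm _ _).2 (by rw [Equiv.apply_symm_apply]; exact hkey), fl (m j) (p + 1),
      (hmem _ _).2 ⟨_, rfl⟩, ?_, ?_⟩
    · intro x hx
      simp only [Equiv.apply_symm_apply, Finset.mem_inter, hmem, hc] at hx ⊢
      obtain ⟨⟨a, ha⟩, ⟨b, hb⟩⟩ := hx
      refine ⟨⟨b, ?_⟩, b, hb⟩
      rw [hq b ?_, hb]
      rintro rfl
      have := hidx _ _ (hfl (m i)) (hfl (m j)) a (ha.trans hb.symm)
      subst this
      exact hne (ha.trans hb.symm)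
    · ext x
      simp only [Equiv.apply_symm_apply, Finset.mem_inter, Finset.mem_erase, hmem, hc]
      constructor
      · rintro ⟨⟨a, ha⟩, hb⟩
        refine ⟨?_, hb⟩
        rintro rfl
        have := hidx _ _ hh (hfl (m j)) a ha
        subst this
        exact hhne ha
      · rintro ⟨hx, b, hb⟩
        refine ⟨⟨b, ?_⟩, b, hb⟩
        rw [hq b ?_, hb]
        rintro rfl
        exact hx hb.symm
end

section
/- Let P₁ and P₂ be finite pure shellable posets. Define the join P₁ * P₂ as the poset on the disjoint union of P₁ and P₂ in which a ≤ b if and only if (a, b ∈ P₁ and a ≤ b in P₁) or (a, b ∈ P₂ and a ≤ b in P₂) or (a ∈ P₁ and b ∈ P₂). Then P₁ * P₂ is pure and shellable. -/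
open scoped Classical

/-- `m` is a maximal chain (as a finite set) with respect to the relation `r`. -/
def IsMaxChainOf {α : Type} (r : α → α → Prop) (m : Finset α) : Prop :=
  IsMaxChain r (m : Set α)

/-- A finite relation is pure if all of its maximal chains have the same cardinality. -/
def PureRel (α : Type) [Fintype α] (r : α → α → Prop) : Prop :=
  ∀ m m' : Finset α, IsMaxChainOf r m → IsMaxChainOf r m' → m.card = m'.card

/-- A finite relation is shellable if its maximal chains admit an enumeration
`m 0, m 1, …` such that for all `i < j` there exist `k < j` and `x ∈ m j` with
`m i ∩ m j ⊆ m k ∩ m j = m j \ {x}`. -/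
def ShellableRel (α : Type) [Fintype α] (r : α → α → Prop) : Prop :=
  ∃ (t : ℕ) (m : Fin t → Finset α),
    (∀ j : Fin t, IsMaxChainOf r (m j)) ∧
    (∀ c : Finset α, IsMaxChainOf r c → ∃! j : Fin t, m j = c) ∧
    ∀ i j : Fin t, i < j → ∃ k : Fin t, k < j ∧ ∃ x ∈ m j,
      m i ∩ m j ⊆ m k ∩ m j ∧ m k ∩ m j = (m j).erase x

/-- The order relation of the join `P₁ * P₂` of two posets, on the disjoint union:
within each summand it is the given order, and every element of `P₁` is below every
element of `P₂`. -/
def joinRel {α β : Type} [PartialOrder α] [PartialOrder β] :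
    α ⊕ β → α ⊕ β → Prop
  | Sum.inl a, Sum.inl b => a ≤ b
  | Sum.inr a, Sum.inr b => a ≤ b
  | Sum.inl _, Sum.inr _ => True
  | Sum.inr _, Sum.inl _ => False

theorem chain_disjSum {α β : Type} [PartialOrder α] [PartialOrder β]
    (A : Finset α) (B : Finset β) :
    IsChain joinRel ((A.disjSum B : Finset (α ⊕ β)) : Set (α ⊕ β)) ↔
      IsChain (· ≤ ·) (A : Set α) ∧ IsChain (· ≤ ·) (B : Set β) := by
  constructor
  · intro h
    constructor
    · intro x hx y hy hxy
      have := h (x := Sum.inl x) (by simpa using hx) (y := Sum.inl y) (by simpa using hy)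
        (by simpa using hxy)
      simpa [joinRel] using this
    · intro x hx y hy hxy
      have := h (x := Sum.inr x) (by simpa using hx) (y := Sum.inr y) (by simpa using hy)
        (by simpa using hxy)
      simpa [joinRel] using this
  · rintro ⟨hA, hB⟩ x hx y hy hxy
    rcases x with x | x <;> rcases y with y | y
    · exact hA (by simpa using hx) (by simpa using hy) (by simpa using hxy)
    · left; trivial
    · right; trivial
    · exact hB (by simpa using hx) (by simpa using hy) (by simpa using hxy)

theorem maxChain_iff {α : Type} [Fintype α] (r : α → α → Prop) (m : Finset α) :
    IsMaxChainOf r m ↔ IsChain r (m : Set α) ∧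
      ∀ t : Finset α, IsChain r (t : Set α) → m ⊆ t → m = t := by
  constructor
  · rintro ⟨h, h'⟩
    refine ⟨h, fun t ht hmt => ?_⟩
    exact_mod_cast h' ht (by exact_mod_cast hmt)
  · rintro ⟨h, h'⟩
    refine ⟨h, fun t ht hmt => ?_⟩
    have := h' t.toFinset (by simpa using ht) (by
      intro x hx
      simpa using hmt hx)
    rw [this]; simp

theorem disjSum_sub {α β : Type} {A A' : Finset α} {B B' : Finset β} :
    A.disjSum B ⊆ A'.disjSum B' ↔ A ⊆ A' ∧ B ⊆ B' := by
  simp [Finset.subset_iff]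

theorem disjSum_eq {α β : Type} {A A' : Finset α} {B B' : Finset β} :
    A.disjSum B = A'.disjSum B' ↔ A = A' ∧ B = B' := by
  simp [Finset.ext_iff]

theorem disjSum_int {α β : Type} [DecidableEq α] [DecidableEq β] [DecidableEq (α ⊕ β)] {A A' : Finset α} {B B' : Finset β} :
    A.disjSum B ∩ A'.disjSum B' = (A ∩ A').disjSum (B ∩ B') := by
  ext x; rcases x with x | x <;> simp

theorem maxChain_disjSum {α β : Type} [Fintype α] [Fintype β] [PartialOrder α] [PartialOrder β]
    (A : Finset α) (B : Finset β) :
    IsMaxChainOf joinRel (A.disjSum B : Finset (α ⊕ β)) ↔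
      IsMaxChainOf (· ≤ ·) A ∧ IsMaxChainOf (· ≤ ·) B := by
  simp only [maxChain_iff, chain_disjSum]
  constructor
  · rintro ⟨⟨hA, hB⟩, h⟩
    refine ⟨⟨hA, fun t ht hs => ?_⟩, ⟨hB, fun t ht hs => ?_⟩⟩
    · exact (disjSum_eq.1 (h (t.disjSum B) ((chain_disjSum _ _).2 ⟨ht, hB⟩)
        (disjSum_sub.2 ⟨hs, subset_rfl⟩))).1
    · exact (disjSum_eq.1 (h (A.disjSum t) ((chain_disjSum _ _).2 ⟨hA, ht⟩)
        (disjSum_sub.2 ⟨subset_rfl, hs⟩))).2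
  · rintro ⟨⟨hA, hA'⟩, ⟨hB, hB'⟩⟩
    refine ⟨⟨hA, hB⟩, fun t ht hs => ?_⟩
    rw [← Finset.toLeft_disjSum_toRight (u := t)] at ht hs ⊢
    rw [chain_disjSum] at ht
    rw [disjSum_sub] at hs
    rw [disjSum_eq]
    exact ⟨hA' _ ht.1 hs.1, hB' _ ht.2 hs.2⟩

theorem prod_lt {m n : ℕ} (a c : Fin m) (b d : Fin n) :
    finProdFinEquiv (a, b) < finProdFinEquiv (c, d) ↔ a < c ∨ (a = c ∧ b < d) := by
  simp only [Fin.lt_def, finProdFinEquiv_apply_val, Fin.ext_iff]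
  have hb := b.2
  have hd := d.2
  rcases lt_trichotomy (a : ℕ) c with h | h | h
  · have : n * ((a : ℕ) + 1) ≤ n * c := Nat.mul_le_mul_left _ h
    rw [mul_add] at this
    constructor
    · intro; left; exact h
    · intro; omega
  · rw [h]; omega
  · have : n * ((c : ℕ) + 1) ≤ n * a := Nat.mul_le_mul_left _ h
    rw [mul_add] at this
    constructor
    · intro; omega
    · intro; omega

/-- The join of two finite pure shellable posets is pure and shellable. -/
theorem stmt_5 (P₁ P₂ : Type) [Fintype P₁] [Fintype P₂]
    [PartialOrder P₁] [PartialOrder P₂]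
    (h₁pure : PureRel P₁ (· ≤ ·)) (h₁shell : ShellableRel P₁ (· ≤ ·))
    (h₂pure : PureRel P₂ (· ≤ ·)) (h₂shell : ShellableRel P₂ (· ≤ ·)) :
    PureRel (P₁ ⊕ P₂) joinRel ∧ ShellableRel (P₁ ⊕ P₂) joinRel := by
  constructor
  · intro c c' h h'
    rw [← Finset.toLeft_disjSum_toRight (u := c)] at h ⊢
    rw [← Finset.toLeft_disjSum_toRight (u := c')] at h' ⊢
    rw [maxChain_disjSum] at h h'
    rw [Finset.card_disjSum, Finset.card_disjSum, h₁pure _ _ h.1 h'.1, h₂pure _ _ h.2 h'.2]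
  · obtain ⟨t₁, m₁, hm₁, hu₁, hs₁⟩ := h₁shell
    obtain ⟨t₂, m₂, hm₂, hu₂, hs₂⟩ := h₂shell
    refine ⟨t₁ * t₂, fun i => (m₁ (finProdFinEquiv.symm i).1).disjSum
      (m₂ (finProdFinEquiv.symm i).2), ?_, ?_, ?_⟩
    · intro j
      exact (maxChain_disjSum _ _).2 ⟨hm₁ _, hm₂ _⟩
    · intro c hc
      rw [← Finset.toLeft_disjSum_toRight (u := c)] at hc ⊢
      rw [maxChain_disjSum] at hc
      obtain ⟨a, ha, ha'⟩ := hu₁ _ hc.1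
      obtain ⟨b, hb, hb'⟩ := hu₂ _ hc.2
      refine ⟨finProdFinEquiv (a, b), ?_, ?_⟩
      · simp only [Equiv.symm_apply_apply]
        rw [ha, hb]
      · intro j hj
        obtain ⟨⟨a', b'⟩, rfl⟩ := finProdFinEquiv.surjective j
        simp only [Equiv.symm_apply_apply] at hj
        rw [disjSum_eq] at hj
        rw [ha' _ hj.1, hb' _ hj.2]
    · intro i j hij
      obtain ⟨⟨a, b⟩, rfl⟩ := finProdFinEquiv.surjective i
      obtain ⟨⟨c, d⟩, rfl⟩ := finProdFinEquiv.surjective j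
      rw [prod_lt] at hij
      simp only [Equiv.symm_apply_apply]
      rcases hij with h | ⟨rfl, h⟩
      · obtain ⟨k, hk, x, hx, h1, h2⟩ := hs₁ a c h
        refine ⟨finProdFinEquiv (k, d), (prod_lt _ _ _ _).2 (Or.inl hk), Sum.inl x,
          by simpa using hx, ?_, ?_⟩
        · simp only [Equiv.symm_apply_apply, disjSum_int, disjSum_sub]
          exact ⟨h1, by simp⟩
        · simp only [Equiv.symm_apply_apply, disjSum_int, h2]
          ext y; rcases y with y | y <;> simp
      · obtain ⟨k, hk, x, hx, h1, h2⟩ := hs₂ b d h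
        refine ⟨finProdFinEquiv (a, k), (prod_lt _ _ _ _).2 (Or.inr ⟨rfl, hk⟩), Sum.inr x,
          by simpa using hx, ?_, ?_⟩
        · simp only [Equiv.symm_apply_apply, disjSum_int, disjSum_sub]
          exact ⟨by simp, h1⟩
        · simp only [Equiv.symm_apply_apply, disjSum_int, h2]
          ext y; rcases y with y | y <;> simp
end

section
/- Let d ≥ 2 and let X be a finite pure d-dimensional simplicial complex (a downward-closed family of finite subsets of a finite vertex set, all of whose maximal faces have d+1 elements). Suppose X is shellable: its maximal faces admit an enumeration σ₁, …, σ_t such that for every j > 1, (a) some d-element subset of σ_j is contained in some σ_i with i < j, and (b) every subset of σ_j that is contained in some σ_i with i < j is contained in a d-element subset of σ_j that is itself contained in some σ_{i′} with i′ < j. Then for every group Γ, every Γ-valued 1-cocycle on X is a 1-coboundary. -/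
open Finset
open scoped Classical

/-- Let `X` be a finite pure `d`-dimensional simplicial complex (`d ≥ 2`),
given as a downward-closed family of finite subsets of a finite vertex set whose maximal
faces all have `d+1` elements.  If `X` is shellable — its maximal faces admit an enumeration
`σ 0, σ 1, …` such that for every `j > 0`: (a) some `d`-element subset of `σ j` is contained
in an earlier `σ i`, and (b) every subset of `σ j` contained in an earlier `σ i` is contained
in a `d`-element subset of `σ j` that is itself contained in an earlier `σ i'` — then for
every group `Γ`, every `Γ`-valued 1-cocycle on `X` is a 1-coboundary. -/
theorem stmt_6 (V : Type) [Fintype V] [DecidableEq V]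
    (d : ℕ) (hd : 2 ≤ d)
    (X : Finset (Finset V))
    (hdown : ∀ s ∈ X, ∀ t ⊆ s, t ∈ X)
    (hpure : ∀ σ ∈ X, (∀ τ ∈ X, σ ⊆ τ → τ = σ) → σ.card = d + 1)
    (t : ℕ) (σ : Fin t → Finset V)
    (hmem : ∀ j : Fin t, σ j ∈ X ∧ ∀ τ ∈ X, σ j ⊆ τ → τ = σ j)
    (henum : ∀ c ∈ X, (∀ τ ∈ X, c ⊆ τ → τ = c) → ∃! j : Fin t, σ j = c)
    (ha : ∀ j : Fin t, 0 < (j : ℕ) →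
      ∃ e ⊆ σ j, e.card = d ∧ ∃ i : Fin t, (i : ℕ) < (j : ℕ) ∧ e ⊆ σ i)
    (hb : ∀ j : Fin t, 0 < (j : ℕ) → ∀ s ⊆ σ j,
      (∃ i : Fin t, (i : ℕ) < (j : ℕ) ∧ s ⊆ σ i) →
      ∃ e, s ⊆ e ∧ e ⊆ σ j ∧ e.card = d ∧
        ∃ i' : Fin t, (i' : ℕ) < (j : ℕ) ∧ e ⊆ σ i')
    (Γ : Type) [Group Γ]
    (f : V → V → Γ)
    (hanti : ∀ u v : V, u ≠ v → ({u, v} : Finset V) ∈ X → f u v = (f v u)⁻¹)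
    (hcocycle : ∀ u v w : V, u ≠ v → v ≠ w → u ≠ w →
      ({u, v, w} : Finset V) ∈ X → f u v * f v w * f w u = 1) :
    ∃ g : V → Γ, ∀ u v : V, u ≠ v → ({u, v} : Finset V) ∈ X →
      f u v = g u * (g v)⁻¹ := by
  have anti : ∀ s ∈ X, ∀ u ∈ s, ∀ v ∈ s, u ≠ v → f u v = (f v u)⁻¹ := by
    intro s hs u hu v hv huv
    exact hanti u v huv (hdown s hs _ (by intro x; simp; rintro (rfl | rfl) <;> assumption))
  have tri : ∀ s ∈ X, ∀ u ∈ s, ∀ v ∈ s, ∀ w ∈ s, u ≠ v → v ≠ w → u ≠ w →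
      f u w = f u v * f v w := by
    intro s hs u hu v hv w hw huv hvw huw
    have h := hcocycle u v w huv hvw huw
      (hdown s hs _ (by intro x; simp; rintro (rfl | rfl | rfl) <;> assumption))
    rw [anti s hs u hu w hw huw]
    exact (eq_inv_of_mul_eq_one_left h).symm
  have hcard : ∀ j, (σ j).card = d + 1 := fun j => hpure _ (hmem j).1 (hmem j).2
  have key : ∀ n : ℕ, n ≤ t → ∃ g : V → Γ, ∀ i : Fin t, (i : ℕ) < n →
      ∀ u ∈ σ i, ∀ v ∈ σ i, u ≠ v → f u v = g u * (g v)⁻¹ := by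
    intro n
    induction n with
    | zero => intro _; exact ⟨fun _ => 1, fun i hi => absurd hi (Nat.not_lt_zero _)⟩
    | succ n ih =>
      intro hn
      obtain ⟨g, hg⟩ := ih (by omega)
      set j : Fin t := ⟨n, hn⟩ with hj
      have hjX := (hmem j).1
      -- it suffices to treat the new facet
      suffices H : ∃ g' : V → Γ, (∀ i : Fin t, (i : ℕ) < n → ∀ u ∈ σ i, g' u = g u) ∧
          ∀ u ∈ σ j, ∀ v ∈ σ j, u ≠ v → f u v = g' u * (g' v)⁻¹ by
        obtain ⟨g', h1, h2⟩ := H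
        refine ⟨g', fun i hi u hu v hv huv => ?_⟩
        by_cases hin : (i : ℕ) < n
        · rw [h1 i hin u hu, h1 i hin v hv]
          exact hg i hin u hu v hv huv
        · have : i = j := Fin.ext (by simp [hj]; omega)
          subst this
          exact h2 u hu v hv huv
      rcases Nat.eq_zero_or_pos n with h0 | hpos
      · have hne : (σ j).Nonempty := Finset.card_pos.mp (by rw [hcard]; omega)
        obtain ⟨x, hx⟩ := hne
        refine ⟨fun v => if v = x then 1 else f v x, fun i hi => by omega, ?_⟩
        intro u hu v hv huv
        by_cases hux : u = x
        · subst hux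
          simp [huv.symm, anti _ hjX u hu v hv huv]
        · by_cases hvx : v = x
          · subst hvx
            simp [huv]
          · simp only [hux, hvx, if_false]
            rw [← anti _ hjX x hx v hv (Ne.symm hvx)]
            exact tri _ hjX u hu x hx v hv hux (Ne.symm hvx) huv
      · have split : ∀ e ⊆ σ j, e.card = d → ∃ w ∈ σ j, w ∉ e ∧ ∀ u ∈ σ j, u ≠ w → u ∈ e := by
          intro e he hec
          have h1 : (σ j \ e).card = 1 := by
            rw [Finset.card_sdiff_of_subset he, hcard, hec]; omega
          obtain ⟨w, hw⟩ := Finset.card_eq_one.mp h1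
          have hw' : ∀ x, (x ∈ σ j ∧ x ∉ e) ↔ x = w := by
            intro x
            rw [← Finset.mem_sdiff, hw, Finset.mem_singleton]
          refine ⟨w, ((hw' w).2 rfl).1, ((hw' w).2 rfl).2, fun u hu huw => ?_⟩
          by_contra hue
          exact huw ((hw' u).1 ⟨hu, hue⟩)
        obtain ⟨e, he, hec, i, hi, hei⟩ := ha j hpos
        obtain ⟨w, hw, hwe, hwo⟩ := split e he hec
        have ge : ∀ u ∈ e, ∀ v ∈ e, u ≠ v → f u v = g u * (g v)⁻¹ :=
          fun u hu v hv => hg i hi u (hei hu) v (hei hv)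
        -- it suffices to check pairs starting at the extra vertex
        have red : ∀ g' : V → Γ, (∀ u ∈ e, g' u = g u) →
            (∀ v ∈ e, f w v = g' w * (g' v)⁻¹) →
            ∀ u ∈ σ j, ∀ v ∈ σ j, u ≠ v → f u v = g' u * (g' v)⁻¹ := by
          intro g' h1 h2 u hu v hv huv
          by_cases huw : u = w
          · subst huw
            exact h2 v (hwo v hv huv.symm)
          · have hue := hwo u hu huw
            by_cases hvw : v = w
            · subst hvw
              rw [anti _ hjX u hu v hv huv, h2 u hue]
              simp
            · have hve := hwo v hv hvw
              rw [h1 u hue, h1 v hve]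
              exact ge u hue v hve huv
        by_cases hold : ∃ i : Fin t, (i : ℕ) < n ∧ w ∈ σ i
        · obtain ⟨k, hk, hwk⟩ := hold
          obtain ⟨e', hwe', he', hec', i', hi', hei'⟩ := hb j hpos {w} (by simpa using hw)
            ⟨k, hk, by simpa using hwk⟩
          rw [Finset.singleton_subset_iff] at hwe'
          obtain ⟨w', hw', hwe2, hwo'⟩ := split e' he' hec'
          have ge' : ∀ u ∈ e', ∀ v ∈ e', u ≠ v → f u v = g u * (g v)⁻¹ :=
            fun u hu v hv => hg i' hi' u (hei' hu) v (hei' hv)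
          refine ⟨g, fun _ _ _ _ => rfl, red g (fun _ _ => rfl) ?_⟩
          intro v hv
          have hwv : w ≠ v := by rintro rfl; exact hwe hv
          by_cases hvw' : v = w'
          · subst hvw'
            obtain ⟨x, hxe, hxv⟩ := Finset.exists_mem_ne (s := e) (by omega) v
            have hwx : w ≠ x := by rintro rfl; exact hwe hxe
            rw [tri _ hjX w hw x (he hxe) v (he hv) hwx hxv hwv, ge x hxe v hv hxv,
              ge' w hwe' x (hwo' x (he hxe) hxv) hwx]
            group
          · exact ge' w hwe' v (hwo' v (he hv) hvw') hwv
        · push Not at hold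
          obtain ⟨x, hxe⟩ : e.Nonempty := Finset.card_pos.mp (by omega)
          have hne : ∀ u ∈ e, u ≠ w := by rintro u hu rfl; exact hwe hu
          refine ⟨fun v => if v = w then f w x * g x else g v, ?_, red _ ?_ ?_⟩
          · intro k hk u hu
            have : u ≠ w := by rintro rfl; exact hold k hk hu
            simp [this]
          · intro u hu
            simp [hne u hu]
          · intro v hv
            simp only [if_true, hne v hv, if_false]
            by_cases hvx : v = x
            · subst hvx; simp
            · rw [tri _ hjX w hw x (he hxe) v (he hv) (hne x hxe).symm (Ne.symm hvx)
                (hne v hv).symm, ge x hxe v hv (Ne.symm hvx)]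
              group
  obtain ⟨g, hg⟩ := key t le_rfl
  refine ⟨g, fun u v huv hX => ?_⟩
  obtain ⟨m, hm, hmax⟩ := X.exists_le_maximal hX
  obtain ⟨j, hj, -⟩ := henum m hmax.1 (fun τ hτ h => le_antisymm (hmax.2 hτ h) h)
  subst hj
  exact hg j j.2 u (hm (by simp)) v (hm (by simp)) huv
end

section
/- Let q be a prime power, F a finite field with q elements, d ≥ 3 an integer, S ⊆ {1,…,d−1} with |S| ≥ 2, Γ any group, and let s be a face of the projected flags complex B(d,S,q) with |S| − |s| ≥ 3 (s possibly empty). The link of s is the simplicial complex whose vertices are the subspaces W with dim(W) ∈ S, W ∉ s and s ∪ {W} a chain, and whose faces are the sets t of such subspaces with s ∪ t a chain. Then every Γ-valued 1-cocycle on the link of s is a 1-coboundary. -/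
open Finset
open scoped Classical

section FlagLattice

set_option linter.unusedSectionVars false

variable {α : Type*} [Lattice α] [BoundedOrder α]

/-- A rank function on a (modular) lattice. -/
structure RkFun (rk : α → ℕ) : Prop where
  smono : StrictMono rk
  modular : ∀ x y, rk (x ⊔ y) + rk (x ⊓ y) = rk x + rk y
  interp : ∀ x y k, x ≤ y → rk x ≤ k → k ≤ rk y → ∃ z, x ≤ z ∧ z ≤ y ∧ rk z = k

variable {rk : α → ℕ}

theorem RkFun.mono (h : RkFun rk) {x y : α} (hxy : x ≤ y) : rk x ≤ rk y :=
  h.smono.monotone hxy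

theorem RkFun.eq_of (h : RkFun rk) {x y : α} (hxy : x ≤ y) (hr : rk y ≤ rk x) : x = y := by
  rcases hxy.eq_or_lt with e | e
  · exact e
  · have := h.smono e; omega

theorem RkFun.connect (h : RkFun rk) {x y : α} (hr : rk x = rk y) (hne : x ≠ y) :
    ∃ z, rk z = rk x ∧ z ≤ x ⊔ y ∧ x ⊓ y ≤ z ∧ rk (x ⊔ z) = rk x + 1 ∧
      rk (x ⊓ y) < rk (z ⊓ y) := by
  have hD : rk (x ⊓ y) < rk x := by
    by_contra hc
    have e1 := h.eq_of (x := x ⊓ y) (y := x) inf_le_left (by omega)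
    have e2 := h.eq_of (x := x ⊓ y) (y := y) inf_le_right (by omega)
    exact hne (e1.symm.trans e2)
  obtain ⟨M, hM1, hM2, hM3⟩ := h.interp (x ⊓ y) y (rk (x ⊓ y) + 1) inf_le_right (by omega) (by omega)
  obtain ⟨N, hN1, hN2, hN3⟩ := h.interp (x ⊓ y) x (rk x - 1) inf_le_left (by omega) (by omega)
  have e1 : N ⊓ M = x ⊓ y := le_antisymm (inf_le_inf hN2 hM2) (le_inf hN1 hM1)
  have e2 : x ⊓ M = x ⊓ y := le_antisymm (inf_le_inf le_rfl hM2) (le_inf inf_le_left hM1)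
  have m1 := h.modular N M
  have m2 := h.modular x M
  rw [e1] at m1
  rw [e2] at m2
  have e3 : x ⊔ (N ⊔ M) = x ⊔ M := by rw [← sup_assoc, sup_eq_left.2 hN2]
  refine ⟨N ⊔ M, by omega, sup_le (hN2.trans le_sup_left) (hM2.trans le_sup_right),
    hN1.trans le_sup_left, by rw [e3]; omega, ?_⟩
  have := h.mono (le_inf le_sup_right hM2 : M ≤ (N ⊔ M) ⊓ y)
  omega

theorem RkFun.factor (h : RkFun rk) {a : ℕ} {U U0 V : α} (hU : rk U = a) (hV : rk V = a)
    (hUV : rk (U ⊔ V) ≤ a + 1) (hlt : rk (U ⊓ U0) < rk (V ⊓ U0)) :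
    U ⊓ U0 ≤ V ∧ rk (V ⊓ U0) = rk (U ⊓ U0) + 1 ∧ (V ⊓ U) ⊔ (V ⊓ U0) = V ∧ rk (V ⊓ U) + 1 = a := by
  have m1 := h.modular U V
  rw [inf_comm U V] at m1
  have m2 := h.modular (V ⊓ U) (V ⊓ U0)
  have l1 : (V ⊓ U) ⊔ (V ⊓ U0) ≤ V := sup_le inf_le_left inf_le_left
  have l2 : (V ⊓ U) ⊓ (V ⊓ U0) ≤ U ⊓ U0 := inf_le_inf inf_le_right inf_le_right
  have r1 := h.mono l1
  have r2 := h.mono l2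
  have ne : rk (V ⊓ U) < a := by
    by_contra hc
    have e1 := h.eq_of (x := V ⊓ U) (y := V) inf_le_left (by omega)
    have e2 := h.eq_of (x := V ⊓ U) (y := U) inf_le_right (by omega)
    have : V = U := e1.symm.trans e2
    rw [this] at hlt; omega
  have e := h.eq_of l2 (by omega)
  refine ⟨?_, by omega, h.eq_of l1 (by omega), by omega⟩
  rw [← e]; exact inf_le_left.trans inf_le_left

theorem RkFun.lat1 (h : RkFun rk) {a : ℕ} {U U0 V V' : α} (hU : rk U = a) (hU0 : rk U0 = a)
    (hV : rk V = a) (hV' : rk V' = a)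
    (hUV : rk (U ⊔ V) ≤ a + 1) (hlt : rk (U ⊓ U0) < rk (V ⊓ U0))
    (hUV' : rk (U ⊔ V') ≤ a + 1) (hlt' : rk (U ⊓ U0) < rk (V' ⊓ U0)) :
    ∃ Z Y, rk Z = a ∧ rk (U ⊓ U0) < rk (Z ⊓ U0) ∧ rk (V ⊔ Z) ≤ a + 1 ∧ rk (V' ⊔ Z) ≤ a + 1 ∧
      rk Y ≤ a + 2 ∧ U ≤ Y ∧ V ≤ Y ∧ V' ≤ Y ∧ Z ≤ Y := by
  obtain ⟨f1, f2, f3, f4⟩ := h.factor hU hV hUV hlt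
  obtain ⟨g1, g2, g3, g4⟩ := h.factor hU hV' hUV' hlt'
  have b1 := h.mono (inf_le_right : V ⊓ U0 ≤ U0)
  by_cases hk : rk (U ⊓ U0) + 2 ≤ a
  · have m1 := h.modular (V ⊓ U0) (V' ⊓ U0)
    have d1 : U ⊓ U0 ≤ (V ⊓ U0) ⊓ (V' ⊓ U0) :=
      le_inf (le_inf f1 inf_le_right) (le_inf g1 inf_le_right)
    have r1 := h.mono d1
    obtain ⟨Q, hQ1, hQ2, hQ3⟩ := h.interp ((V ⊓ U0) ⊔ (V' ⊓ U0)) U0 (rk (U ⊓ U0) + 2)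
      (sup_le inf_le_right inf_le_right) (by omega) (by omega)
    have m2 := h.modular (V ⊓ U) (V' ⊓ U)
    have r2 := h.mono (sup_le inf_le_right inf_le_right : (V ⊓ U) ⊔ (V' ⊓ U) ≤ U)
    have d2 : U ⊓ U0 ≤ (V ⊓ U) ⊓ (V' ⊓ U) :=
      le_inf (le_inf f1 inf_le_left) (le_inf g1 inf_le_left)
    obtain ⟨P, hP1, hP2, hP3⟩ := h.interp (U ⊓ U0) ((V ⊓ U) ⊓ (V' ⊓ U)) (a - 2)
      d2 (by omega) (by omega)
    have hDQ : U ⊓ U0 ≤ Q := d1.trans (inf_le_left.trans (le_sup_left.trans hQ1))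
    have hPV : P ≤ V ⊓ U := hP2.trans inf_le_left
    have hPV' : P ≤ V' ⊓ U := hP2.trans inf_le_right
    have hPU : P ≤ U := hPV.trans inf_le_right
    have e1 : P ⊓ Q = U ⊓ U0 := le_antisymm (inf_le_inf hPU hQ2) (le_inf hP1 hDQ)
    have m3 := h.modular P Q
    rw [e1] at m3
    have m4 := h.modular U Q
    have r4 := h.mono (le_inf inf_le_left hDQ : U ⊓ U0 ≤ U ⊓ Q)
    have m5 := h.modular (V ⊓ U) Q
    have r5 := h.mono (le_inf (le_inf f1 inf_le_left) hDQ : U ⊓ U0 ≤ (V ⊓ U) ⊓ Q)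
    have m6 := h.modular (V' ⊓ U) Q
    have r6 := h.mono (le_inf (le_inf g1 inf_le_left) hDQ : U ⊓ U0 ≤ (V' ⊓ U) ⊓ Q)
    have v1 : V ≤ (V ⊓ U) ⊔ Q := by
      conv_lhs => rw [← f3]
      exact sup_le_sup le_rfl (le_sup_left.trans hQ1)
    have v2 : V' ≤ (V' ⊓ U) ⊔ Q := by
      conv_lhs => rw [← g3]
      exact sup_le_sup le_rfl (le_sup_right.trans hQ1)
    have s1 := h.mono (sup_le v1 (sup_le_sup hPV le_rfl) : V ⊔ (P ⊔ Q) ≤ (V ⊓ U) ⊔ Q)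
    have s2 := h.mono (sup_le v2 (sup_le_sup hPV' le_rfl) : V' ⊔ (P ⊔ Q) ≤ (V' ⊓ U) ⊔ Q)
    have s3 := h.mono (le_inf le_sup_right hQ2 : Q ≤ (P ⊔ Q) ⊓ U0)
    exact ⟨P ⊔ Q, U ⊔ Q, by omega, by omega, by omega, by omega, by omega, le_sup_left,
      v1.trans (sup_le_sup inf_le_right le_rfl), v2.trans (sup_le_sup inf_le_right le_rfl),
      sup_le_sup hPU le_rfl⟩
  · have aux : ∀ X, rk X = a → rk (U ⊓ U0) < rk (X ⊓ U0) → X = U0 := by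
      intro X hX hl
      have e1 := h.eq_of (x := X ⊓ U0) (y := X) inf_le_left (by omega)
      have e2 := h.eq_of (x := X ⊓ U0) (y := U0) inf_le_right (by omega)
      exact e1.symm.trans e2
    have e1 := aux V hV hlt
    have e2 := aux V' hV' hlt'
    subst e1
    subst e2
    exact ⟨V', U ⊔ V', hV, hlt, by simp; omega, by simp; omega, by omega, le_sup_left, le_sup_right,
      le_sup_right, le_sup_right⟩

theorem RkFun.lat2 (h : RkFun rk) {a : ℕ} {U U0 V : α} (hU : rk U = a) (hU0 : rk U0 = a)
    (hV : rk V = a) (hUV : rk (U ⊔ V) ≤ a + 1) (heq : rk (U ⊓ U0) = rk (V ⊓ U0)) (hne : U ≠ V) :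
    ∃ Z Y, rk Z = a ∧ rk (U ⊓ U0) < rk (Z ⊓ U0) ∧ rk (U ⊔ Z) ≤ a + 1 ∧ rk (V ⊔ Z) ≤ a + 1 ∧
      rk Y ≤ a + 2 ∧ U ≤ Y ∧ V ≤ Y ∧ Z ≤ Y := by
  have hk : rk (U ⊓ U0) < a := by
    by_contra hc
    have e1 := h.eq_of (x := U ⊓ U0) (y := U) inf_le_left (by omega)
    have e2 := h.eq_of (x := U ⊓ U0) (y := U0) inf_le_right (by omega)
    have e3 := h.eq_of (x := V ⊓ U0) (y := V) inf_le_left (by omega)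
    have e4 := h.eq_of (x := V ⊓ U0) (y := U0) inf_le_right (by omega)
    exact hne ((e1.symm.trans e2).trans (e4.symm.trans e3))
  have m0 := h.modular U V
  have n0 : rk (U ⊓ V) < a := by
    by_contra hc
    have e1 := h.eq_of (x := U ⊓ V) (y := U) inf_le_left (by omega)
    have e2 := h.eq_of (x := U ⊓ V) (y := V) inf_le_right (by omega)
    exact hne (e1.symm.trans e2)
  by_cases hD : U ⊓ U0 = V ⊓ U0
  · obtain ⟨M, hM1, hM2, hM3⟩ := h.interp (U ⊓ U0) U0 (rk (U ⊓ U0) + 1) inf_le_right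
      (by omega) (by omega)
    have hDV : U ⊓ U0 ≤ V := by rw [hD]; exact inf_le_left
    have e1 : (U ⊓ V) ⊓ M = U ⊓ U0 :=
      le_antisymm (inf_le_inf inf_le_left hM2) (le_inf (le_inf inf_le_left hDV) hM1)
    have m1 := h.modular (U ⊓ V) M
    rw [e1] at m1
    have m2 := h.modular U M
    have r2 := h.mono (le_inf inf_le_left hM1 : U ⊓ U0 ≤ U ⊓ M)
    have m3 := h.modular V M
    have r3 := h.mono (le_inf hDV hM1 : U ⊓ U0 ≤ V ⊓ M)
    have m4 := h.modular (U ⊔ V) M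
    have r4 := h.mono (le_inf (inf_le_left.trans le_sup_left) hM1 : U ⊓ U0 ≤ (U ⊔ V) ⊓ M)
    have s1 := h.mono (sup_le le_sup_left (sup_le_sup inf_le_left le_rfl) :
      U ⊔ ((U ⊓ V) ⊔ M) ≤ U ⊔ M)
    have s2 := h.mono (sup_le le_sup_left (sup_le_sup inf_le_right le_rfl) :
      V ⊔ ((U ⊓ V) ⊔ M) ≤ V ⊔ M)
    have s3 := h.mono (le_inf le_sup_right hM2 : M ≤ ((U ⊓ V) ⊔ M) ⊓ U0)
    exact ⟨(U ⊓ V) ⊔ M, (U ⊔ V) ⊔ M, by omega, by omega, by omega, by omega, by omega,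
      le_sup_left.trans le_sup_left, le_sup_right.trans le_sup_left,
      sup_le_sup (inf_le_left.trans le_sup_left) le_rfl⟩
  · have r1 : rk (U ⊓ U0) < rk ((U ⊓ U0) ⊔ (V ⊓ U0)) := by
      by_contra hc
      have e1 := h.eq_of (le_sup_left : U ⊓ U0 ≤ (U ⊓ U0) ⊔ (V ⊓ U0)) (by omega)
      have e2 := h.eq_of (le_sup_right : V ⊓ U0 ≤ (U ⊓ U0) ⊔ (V ⊓ U0)) (by omega)
      exact hD (e1.trans e2.symm)
    have l0 : (U ⊓ U0) ⊔ (V ⊓ U0) ≤ U0 := sup_le inf_le_right inf_le_right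
    have r2 := h.mono l0
    have r3 := h.mono (le_sup_left : U ≤ U ⊔ V)
    obtain ⟨Z, hZ1, hZ2, hZ3⟩ := h.interp ((U ⊓ U0) ⊔ (V ⊓ U0)) (U ⊔ V) a
      (sup_le_sup inf_le_left inf_le_left) (by omega) (by omega)
    have s1 := h.mono (sup_le le_sup_left hZ2 : U ⊔ Z ≤ U ⊔ V)
    have s2 := h.mono (sup_le le_sup_right hZ2 : V ⊔ Z ≤ U ⊔ V)
    have s3 := h.mono (le_inf hZ1 l0)
    exact ⟨Z, U ⊔ V, hZ3, by omega, by omega, by omega, by omega, le_sup_left, le_sup_right, hZ2⟩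

variable {Γ : Type*} [Group Γ]

/-- `f` is a cocycle on the rank-selected order complex. -/
structure Cocyc (rk : α → ℕ) (T : Finset ℕ) (f : α → α → Γ) : Prop where
  anti : ∀ x y, x < y → rk x ∈ T → rk y ∈ T → f y x = (f x y)⁻¹
  coc : ∀ x y z, x < y → y < z → rk x ∈ T → rk y ∈ T → rk z ∈ T → f x z = f x y * f y z

theorem RkFun.lt_of (h : RkFun rk) {x y : α} (hxy : x ≤ y) (hr : rk x < rk y) : x < y := by
  rcases hxy.eq_or_lt with e | e
  · rw [e] at hr; omega
  · exact e

theorem RkFun.indep (h : RkFun rk) {T : Finset ℕ} {f : α → α → Γ} (hf : Cocyc rk T f)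
    {a b c : ℕ} (ha : a ∈ T) (hb : b ∈ T) (hc : c ∈ T) (hab : a < b) (hbc : b < c)
    {U V : α} (hU : rk U = a) (hV : rk V = a) (hUV : rk (U ⊔ V) ≤ a + 1) :
    ∀ (n : ℕ) (W W' : α), rk W = c → rk W' = c → U ≤ W → V ≤ W → U ≤ W' → V ≤ W' →
      c ≤ rk (W ⊓ W') + n → f U W * f W V = f U W' * f W' V := by
  have key : ∀ B W, rk B = b → rk W = c → U ≤ B → V ≤ B → B ≤ W →
      f U W * f W V = f U B * f B V := by
    intro B W hB hW hUB hVB hBW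
    have l1 : U < B := h.lt_of hUB (by omega)
    have l2 : V < B := h.lt_of hVB (by omega)
    have l3 : B < W := h.lt_of hBW (by omega)
    subst hU hB hW
    rw [hf.coc U B W l1 l3 ha hb hc, hf.anti V W (l2.trans l3) (by rwa [hV]) hc,
      hf.coc V B W l2 l3 (by rwa [hV]) hb hc, hf.anti V B l2 (by rwa [hV]) hb]
    group
  intro n
  induction n with
  | zero =>
    intro W W' hW hW' _ _ _ _ hr
    have e1 := h.eq_of (x := W ⊓ W') (y := W) inf_le_left (by omega)
    have e2 := h.eq_of (x := W ⊓ W') (y := W') inf_le_right (by omega)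
    rw [e1.symm.trans e2]
  | succ n ih =>
    intro W W' hW hW' hUW hVW hUW' hVW' hr
    by_cases hne : W = W'
    · rw [hne]
    obtain ⟨Z, z1, z2, z3, z4, z5⟩ := h.connect (hW.trans hW'.symm) hne
    have hUZ : U ≤ Z := (le_inf hUW hUW').trans z3
    have hVZ : V ≤ Z := (le_inf hVW hVW').trans z3
    have m := h.modular W Z
    obtain ⟨B, b1, b2, b3⟩ := h.interp (U ⊔ V) (W ⊓ Z) b
      (sup_le (le_inf hUW hUZ) (le_inf hVW hVZ)) (by omega) (by omega)
    rw [← ih Z W' (by omega) hW' hUZ hVZ hUW' hVW' (by omega),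
      key B W b3 hW (le_sup_left.trans b1) (le_sup_right.trans b1) (b2.trans inf_le_left),
      key B Z b3 (by omega) (le_sup_left.trans b1) (le_sup_right.trans b1) (b2.trans inf_le_right)]

theorem exists_rec_fun {β : Type*} (m : β → ℕ) (p : β → β) (φ : β → Γ) :
    ∃ g : β → Γ, ∀ x, m (p x) < m x → g x = φ x * g (p x) := by
  classical
  let G : (x : β) → ((y : β) → m y < m x → Γ) → Γ := fun x ih =>
    if hx : m (p x) < m x then φ x * ih (p x) hx else 1
  refine ⟨(measure m).wf.fix G, fun x hx => ?_⟩
  rw [WellFounded.fix_eq]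
  simp only [G]
  rw [dif_pos hx]

theorem RkFun.main (h : RkFun rk) {T : Finset ℕ} {f : α → α → Γ} (hf : Cocyc rk T f)
    {a b c : ℕ} (ha : a ∈ T) (hb : b ∈ T) (hc : c ∈ T) (hab : a < b) (hbc : b < c)
    (hbot : rk (⊥ : α) ≤ a) (htop : c ≤ rk (⊤ : α)) :
    ∃ g : α → Γ, ∀ U V W, rk U = a → rk V = a → rk W = c → U ≤ W → V ≤ W →
      f W U * g U = f W V * g V := by
  obtain ⟨U0, -, -, hU0⟩ := h.interp ⊥ ⊤ a bot_le hbot (by omega)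
  have up : ∀ Y, rk Y ≤ c → ∃ W, Y ≤ W ∧ rk W = c := fun Y hY => by
    obtain ⟨W, w1, -, w2⟩ := h.interp Y ⊤ c le_top hY htop
    exact ⟨W, w1, w2⟩
  have hp : ∀ U : α, ∃ p W, rk U = a → U ≠ U0 → rk p = a ∧ rk (U ⊔ p) ≤ a + 1 ∧
      rk (U ⊓ U0) < rk (p ⊓ U0) ∧ U ≤ W ∧ p ≤ W ∧ rk W = c := by
    intro U
    by_cases hU : rk U = a ∧ U ≠ U0
    · obtain ⟨z, z1, z2, z3, z4, z5⟩ := h.connect (hU.1.trans hU0.symm) hU.2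
      obtain ⟨W, w1, w2⟩ := up (U ⊔ z) (by omega)
      exact ⟨z, W, fun _ _ => ⟨by omega, by omega, z5, le_sup_left.trans w1,
        le_sup_right.trans w1, w2⟩⟩
    · exact ⟨U, U, fun h1 h2 => absurd ⟨h1, h2⟩ hU⟩
  choose p w hpw using hp
  obtain ⟨g, hg⟩ := exists_rec_fun (fun U => a - rk (U ⊓ U0)) p (fun U => f U (w U) * f (w U) (p U))
  have flip : ∀ U W, rk U = a → rk W = c → U ≤ W → f W U = (f U W)⁻¹ := by
    intro U W hU hW hUW
    exact hf.anti U W (h.lt_of hUW (by omega)) (by rwa [hU]) (by rwa [hW])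
  have par : ∀ U W, rk U = a → U ≠ U0 → rk W = c → U ≤ W → p U ≤ W →
      f W U * g U = f W (p U) * g (p U) := by
    intro U W hU hne hW hUW hpW
    obtain ⟨p1, p2, p3, p4, p5, p6⟩ := hpw U hU hne
    have r1 := h.mono (inf_le_right : p U ⊓ U0 ≤ U0)
    rw [hg U (by omega)]
    rw [h.indep hf ha hb hc hab hbc hU p1 p2 c (w U) W p6 hW p4 p5 hUW hpW (by omega),
      flip U W hU hW hUW]
    group
  -- propagation of compatibility from one `W` to all
  have spread : ∀ U V W, rk U = a → rk V = a → rk W = c → rk (U ⊔ V) ≤ a + 1 → U ≤ W → V ≤ W →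
      f W U * g U = f W V * g V → ∀ W', rk W' = c → U ≤ W' → V ≤ W' →
      f W' U * g U = f W' V * g V := by
    intro U V W hU hV hW hUV hUW hVW hE W' hW' hUW' hVW'
    have hi := h.indep hf ha hb hc hab hbc hU hV hUV c W W' hW hW' hUW hVW hUW' hVW' (by omega)
    rw [flip U W hU hW hUW] at hE
    have e : g U = (f U W * f W V) * g V := by
      rw [mul_assoc, ← hE]; group
    rw [e, hi, flip U W' hU hW' hUW']
    group
  have claim : ∀ n U V, rk U = a → rk V = a → rk (U ⊔ V) ≤ a + 1 →
      a ≤ rk (U ⊓ U0) + n → a ≤ rk (V ⊓ U0) + n →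
      ∀ W, rk W = c → U ≤ W → V ≤ W → f W U * g U = f W V * g V := by
    intro n
    induction n with
    | zero =>
      intro U V hU hV hUV hu hv W _ _ _
      have e1 := h.eq_of (x := U ⊓ U0) (y := U) inf_le_left (by omega)
      have e2 := h.eq_of (x := U ⊓ U0) (y := U0) inf_le_right (by omega)
      have e3 := h.eq_of (x := V ⊓ U0) (y := V) inf_le_left (by omega)
      have e4 := h.eq_of (x := V ⊓ U0) (y := U0) inf_le_right (by omega)
      rw [(e1.symm.trans e2).trans (e4.symm.trans e3)]
    | succ n ih =>
      have A : ∀ U V, rk U = a → rk V = a → rk (U ⊔ V) ≤ a + 1 →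
          a = rk (U ⊓ U0) + (n + 1) → a ≤ rk (V ⊓ U0) + n →
          ∀ W, rk W = c → U ≤ W → V ≤ W → f W U * g U = f W V * g V := by
        intro U V hU hV hUV hu hv
        have hne : U ≠ U0 := by
          rintro rfl
          rw [inf_idem] at hu; omega
        obtain ⟨p1, p2, p3, p4, p5, p6⟩ := hpw U hU hne
        obtain ⟨Z, Y, z1, z2, z3, z4, z5, y1, y2, y3, y4⟩ :=
          h.lat1 hU hU0 p1 hV p2 p3 hUV (by omega)
        obtain ⟨W, w1, w2⟩ := up Y (by omega)
        refine spread U V W hU hV w2 hUV (y1.trans w1) (y3.trans w1) ?_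
        rw [par U W hU hne w2 (y1.trans w1) (y2.trans w1),
          ih (p U) Z p1 z1 z3 (by omega) (by omega) W w2 (y2.trans w1) (y4.trans w1),
          ih V Z hV z1 z4 (by omega) (by omega) W w2 (y3.trans w1) (y4.trans w1)]
      intro U V hU hV hUV hu hv
      by_cases hu' : a ≤ rk (U ⊓ U0) + n
      · by_cases hv' : a ≤ rk (V ⊓ U0) + n
        · exact ih U V hU hV hUV hu' hv'
        · intro W hW hUW hVW
          exact (A V U hV hU (by rwa [sup_comm]) (by omega) hu' W hW hVW hUW).symm
      · by_cases hv' : a ≤ rk (V ⊓ U0) + n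
        · exact A U V hU hV hUV (by omega) hv'
        · by_cases hne : U = V
          · intro W _ _ _; rw [hne]
          obtain ⟨Z, Y, z1, z2, z3, z4, z5, y1, y2, y3⟩ :=
            h.lat2 hU hU0 hV hUV (by omega) hne
          obtain ⟨W, w1, w2⟩ := up Y (by omega)
          refine spread U V W hU hV w2 hUV (y1.trans w1) (y2.trans w1) ?_
          rw [A U Z hU z1 z3 (by omega) (by omega) W w2 (y1.trans w1) (y3.trans w1),
            A V Z hV z1 z4 (by omega) (by omega) W w2 (y2.trans w1) (y3.trans w1)]
  have fin : ∀ n U V W, rk U = a → rk V = a → rk W = c → U ≤ W → V ≤ W →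
      a ≤ rk (U ⊓ V) + n → f W U * g U = f W V * g V := by
    intro n
    induction n with
    | zero =>
      intro U V W hU hV _ _ _ hr
      have e1 := h.eq_of (x := U ⊓ V) (y := U) inf_le_left (by omega)
      have e2 := h.eq_of (x := U ⊓ V) (y := V) inf_le_right (by omega)
      rw [e1.symm.trans e2]
    | succ n ih =>
      intro U V W hU hV hW hUW hVW hr
      by_cases hne : U = V
      · rw [hne]
      obtain ⟨Z, z1, z2, z3, z4, z5⟩ := h.connect (hU.trans hV.symm) hne
      have hZW : Z ≤ W := z2.trans (sup_le hUW hVW)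
      rw [claim a U Z hU (by omega) (by omega) (by omega) (by omega) W hW hUW hZW,
        ih Z V W (by omega) hV hW hZW hVW (by omega)]
  exact ⟨g, fun U V W hU hV hW hUW hVW => fin a U V W hU hV hW hUW hVW (by omega)⟩

theorem RkFun.cobound (h : RkFun rk) {T : Finset ℕ} {f : α → α → Γ} (hf : Cocyc rk T f)
    (hT : 3 ≤ T.card) (hbot : rk (⊥ : α) = 0) (htop : ∀ t ∈ T, t ≤ rk (⊤ : α)) :
    ∃ G : α → Γ, ∀ x y, x < y → rk x ∈ T → rk y ∈ T → f x y = G x * (G y)⁻¹ := by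
  classical
  have hne : T.Nonempty := Finset.card_pos.1 (by omega)
  obtain ⟨a, ha, hamin⟩ : ∃ a ∈ T, ∀ t ∈ T, a ≤ t :=
    ⟨T.min' hne, T.min'_mem hne, fun t ht => T.min'_le t ht⟩
  obtain ⟨c, hc, hcmax⟩ : ∃ c ∈ T, ∀ t ∈ T, t ≤ c :=
    ⟨T.max' hne, T.max'_mem hne, fun t ht => T.le_max' t ht⟩
  obtain ⟨b, hb⟩ : ((T.erase a).erase c).Nonempty := by
    apply Finset.card_pos.1
    have h1 := Finset.pred_card_le_card_erase (s := T) (a := a)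
    have h2 := Finset.pred_card_le_card_erase (s := T.erase a) (a := c)
    omega
  simp only [Finset.mem_erase] at hb
  obtain ⟨hbc, hba, hb⟩ := hb
  have hab : a < b := lt_of_le_of_ne (hamin b hb) (Ne.symm hba)
  have hbc : b < c := lt_of_le_of_ne (hcmax b hb) hbc
  obtain ⟨g, hg⟩ := h.main hf ha hb hc hab hbc (by omega) (htop c hc)
  have down : ∀ x, ∃ u, rk x ∈ T → u ≤ x ∧ rk u = a := by
    intro x
    by_cases hx : rk x ∈ T
    · obtain ⟨u, -, u1, u2⟩ := h.interp ⊥ x a bot_le (by omega) (hamin _ hx)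
      exact ⟨u, fun _ => ⟨u1, u2⟩⟩
    · exact ⟨x, fun h' => absurd h' hx⟩
  choose u hu using down
  have wd : ∀ x U V, rk x ∈ T → rk x ≠ a → U ≤ x → V ≤ x → rk U = a → rk V = a →
      f x U * g U = f x V * g V := by
    intro x U V hx hxa hUx hVx hU hV
    by_cases hxc : rk x = c
    · exact hg U V x hU hV hxc hUx hVx
    obtain ⟨W, w1, -, w2⟩ := h.interp x ⊤ c le_top (hcmax _ hx) (htop c hc)
    have hlt := hamin _ hx
    have hlt' := hcmax _ hx
    have lxW : x < W := h.lt_of w1 (by omega)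
    have hWT : rk W ∈ T := by rwa [w2]
    have key : ∀ X, X ≤ x → rk X = a → f x X = f x W * f W X := by
      intro X hXx hX
      have l : X < x := h.lt_of hXx (by omega)
      have hXT : rk X ∈ T := by rwa [hX]
      rw [hf.anti X x l hXT hx, hf.anti X W (l.trans lxW) hXT hWT,
        hf.coc X x W l lxW hXT hx hWT]
      group
    rw [key U hUx hU, key V hVx hV, mul_assoc, mul_assoc,
      hg U V W hU hV w2 (hUx.trans w1) (hVx.trans w1)]
  refine ⟨fun x => if rk x = a then g x else f x (u x) * g (u x), ?_⟩
  intro x y hxy hx hy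
  have hr := h.smono hxy
  have hya : rk y ≠ a := by have := hamin _ hx; omega
  simp only [if_neg hya]
  have hxy' := hf.anti x y hxy hx hy
  by_cases hxa : rk x = a
  · rw [if_pos hxa, wd y (u y) x hy hya (hu y hy).1 hxy.le (hu y hy).2 hxa, hxy']
    group
  · rw [if_neg hxa]
    obtain ⟨u1, u2⟩ := hu x hx
    rw [wd y (u y) (u x) hy hya (hu y hy).1 (u1.trans hxy.le) (hu y hy).2 u2]
    have hlt := hamin _ hx
    have l : u x < x := h.lt_of u1 (by omega)
    have huT : rk (u x) ∈ T := by rwa [u2]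
    rw [hf.anti _ _ l huT hx, hf.anti _ _ (l.trans hxy) huT hy, hf.coc _ _ _ l hxy huT hx hy]
    group

end FlagLattice

theorem submodule_interp (F : Type) [Field F] (n : ℕ) (x : Submodule F (Fin n → F)) :
    ∀ (k : ℕ) (y : Submodule F (Fin n → F)), x ≤ y →
      Module.finrank F x ≤ k → k ≤ Module.finrank F y →
      ∃ z, x ≤ z ∧ z ≤ y ∧ Module.finrank F z = k := by
  intro k y hxy hx
  induction k, hx using Nat.le_induction with
  | base => intro _; exact ⟨x, le_rfl, hxy, rfl⟩
  | succ k hk ih =>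
    intro hy
    obtain ⟨z, z1, z2, z3⟩ := ih (by omega)
    have hlt : z < y := lt_of_le_of_ne z2 (by rintro rfl; omega)
    obtain ⟨v, v1, v2⟩ := SetLike.exists_of_lt hlt
    refine ⟨z ⊔ Submodule.span F {v}, z1.trans le_sup_left, sup_le z2 ?_, ?_⟩
    · rw [Submodule.span_singleton_le_iff_mem]; exact v1
    · rw [Submodule.finrank_sup_span_singleton v2, z3]

theorem chain_interp (F : Type) [Field F] (n : ℕ) (s : Finset (Submodule F (Fin n → F))) :
    IsChain (· ≤ ·) (s : Set (Submodule F (Fin n → F))) →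
    ∀ (k : ℕ) (x y : Submodule F (Fin n → F)), (∀ V ∈ s, x ≤ V ∨ V ≤ x) →
      (∀ V ∈ s, y ≤ V ∨ V ≤ y) → x ≤ y →
      Module.finrank F x ≤ k → k ≤ Module.finrank F y →
      ∃ z, x ≤ z ∧ z ≤ y ∧ Module.finrank F z = k ∧ ∀ V ∈ s, z ≤ V ∨ V ≤ z := by
  induction s using Finset.induction_on with
  | empty =>
    intro _ k x y _ _ hxy h1 h2
    obtain ⟨z, z1, z2, z3⟩ := submodule_interp F n x k y hxy h1 h2
    exact ⟨z, z1, z2, z3, by simp⟩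
  | insert V s hV ih =>
    intro hch k x y hx hy hxy h1 h2
    have hch' : IsChain (· ≤ ·) (s : Set (Submodule F (Fin n → F))) :=
      hch.mono (by simp)
    have hVs : ∀ W ∈ s, V ≤ W ∨ W ≤ V := fun W hW =>
      hch.total (by simp) (by simp [hW])
    have hx' : ∀ W ∈ s, x ≤ W ∨ W ≤ x := fun W hW => hx W (Finset.mem_insert_of_mem hW)
    have hy' : ∀ W ∈ s, y ≤ W ∨ W ≤ y := fun W hW => hy W (Finset.mem_insert_of_mem hW)
    suffices hs : ∃ z, x ≤ z ∧ z ≤ y ∧ Module.finrank F z = k ∧ (∀ W ∈ s, z ≤ W ∨ W ≤ z) ∧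
        (z ≤ V ∨ V ≤ z) by
      obtain ⟨z, z1, z2, z3, z4, z5⟩ := hs
      refine ⟨z, z1, z2, z3, fun W hW => ?_⟩
      rcases Finset.mem_insert.1 hW with rfl | hW
      · exact z5
      · exact z4 W hW
    rcases hx V (Finset.mem_insert_self _ _) with a1 | a1
    · rcases hy V (Finset.mem_insert_self _ _) with a2 | a2
      · obtain ⟨z, z1, z2, z3, z4⟩ := ih hch' k x y hx' hy' hxy h1 h2
        exact ⟨z, z1, z2, z3, z4, Or.inl (z2.trans a2)⟩
      · rcases le_total k (Module.finrank F V) with hk | hk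
        · obtain ⟨z, z1, z2, z3, z4⟩ := ih hch' k x V hx' hVs a1 h1 hk
          exact ⟨z, z1, z2.trans a2, z3, z4, Or.inl z2⟩
        · obtain ⟨z, z1, z2, z3, z4⟩ := ih hch' k V y hVs hy' a2 hk h2
          exact ⟨z, a1.trans z1, z2, z3, z4, Or.inr z1⟩
    · obtain ⟨z, z1, z2, z3, z4⟩ := ih hch' k x y hx' hy' hxy h1 h2
      exact ⟨z, z1, z2, z3, z4, Or.inr (a1.trans z1)⟩

/-- The sublattice of all subspaces comparable with every member of `s`. -/
def compLat (F : Type) [Field F] (n : ℕ) (s : Finset (Submodule F (Fin n → F))) :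
    Sublattice (Submodule F (Fin n → F)) where
  carrier := {W | ∀ V ∈ s, W ≤ V ∨ V ≤ W}
  supClosed' := by
    intro x hx y hy V hV
    rcases hx V hV with h1 | h1
    · rcases hy V hV with h2 | h2
      · exact Or.inl (sup_le h1 h2)
      · exact Or.inr (h2.trans le_sup_right)
    · exact Or.inr (h1.trans le_sup_left)
  infClosed' := by
    intro x hx y hy V hV
    rcases hx V hV with h1 | h1
    · exact Or.inl (inf_le_left.trans h1)
    · rcases hy V hV with h2 | h2
      · exact Or.inl (inf_le_right.trans h2)
      · exact Or.inr (le_inf h1 h2)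

noncomputable instance (F : Type) [Field F] (n : ℕ) (s : Finset (Submodule F (Fin n → F))) :
    BoundedOrder (compLat F n s) where
  top := ⟨⊤, fun _ _ => Or.inr le_top⟩
  bot := ⟨⊥, fun _ _ => Or.inl bot_le⟩
  le_top x := (le_top : x.1 ≤ ⊤)
  bot_le x := (bot_le : ⊥ ≤ x.1)

theorem compLat_rk (F : Type) [Field F] (n : ℕ) (s : Finset (Submodule F (Fin n → F)))
    (hs : IsChain (· ≤ ·) (s : Set (Submodule F (Fin n → F)))) :
    RkFun (fun x : compLat F n s => Module.finrank F x.1) where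
  smono := fun x y hxy => Submodule.finrank_lt_finrank_of_lt (show x.1 < y.1 from hxy)
  modular := fun x y => Submodule.finrank_sup_add_finrank_inf_eq x.1 y.1
  interp := by
    intro x y k hxy h1 h2
    obtain ⟨z, z1, z2, z3, z4⟩ := chain_interp F n s hs k x.1 y.1 x.2 y.2 hxy h1 h2
    exact ⟨⟨z, z4⟩, z1, z2, z3⟩

/-- The link of any face `s` of codimension at least `3` in the projected
flags complex `B(d,S,q)` has trivial 1-cohomology with respect to every group `Γ`: every
`Γ`-valued 1-cocycle on the link of `s` is a 1-coboundary. -/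
theorem stmt_7 (q : ℕ) (hq : IsPrimePow q)
    (F : Type) [Field F] [Fintype F] (hF : Fintype.card F = q)
    (d : ℕ) (hd : 3 ≤ d)
    (S : Finset ℕ) (hS : S ⊆ Finset.Icc 1 (d - 1)) (hScard : 2 ≤ S.card)
    (s : Finset (Submodule F (Fin d → F))) (hs : IsFlagFace F d S s)
    (hcodim : s.card + 3 ≤ S.card)
    (Γ : Type) [Group Γ]
    (f : Submodule F (Fin d → F) → Submodule F (Fin d → F) → Γ)
    (hanti : ∀ U V : Submodule F (Fin d → F), U ≠ V → U ∉ s → V ∉ s →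
      IsFlagFace F d S (insert U (insert V s)) → f U V = (f V U)⁻¹)
    (hcocycle : ∀ U V W : Submodule F (Fin d → F),
      U ≠ V → V ≠ W → U ≠ W → U ∉ s → V ∉ s → W ∉ s →
      IsFlagFace F d S (insert U (insert V (insert W s))) →
      f U V * f V W * f W U = 1) :
    ∃ g : Submodule F (Fin d → F) → Γ,
      ∀ U V : Submodule F (Fin d → F), U ≠ V → U ∉ s → V ∉ s →
        IsFlagFace F d S (insert U (insert V s)) → f U V = g U * (g V)⁻¹ := by
  set T : Finset ℕ := S \ s.image (fun W : Submodule F (Fin d → F) => Module.finrank F W) with hT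
  have hTcard : 3 ≤ T.card := by
    have h1 : S.card - (s.image (fun W : Submodule F (Fin d → F) => Module.finrank F W)).card ≤ T.card := by
      rw [hT]; exact Finset.le_card_sdiff _ _
    have h2 := Finset.card_image_le (s := s) (f := fun W : Submodule F (Fin d → F) => Module.finrank F W)
    omega
  have notin : ∀ x : compLat F d s, Module.finrank F x.1 ∈ T → x.1 ∉ s := by
    intro x hx hxs
    rw [hT, Finset.mem_sdiff] at hx
    exact hx.2 (Finset.mem_image_of_mem _ hxs)
  have inS : ∀ x : compLat F d s, Module.finrank F x.1 ∈ T → Module.finrank F x.1 ∈ S := by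
    intro x hx
    rw [hT, Finset.mem_sdiff] at hx
    exact hx.1
  have face : ∀ t : Finset (Submodule F (Fin d → F)), IsFlagFace F d S t →
      ∀ x : compLat F d s, Module.finrank F x.1 ∈ T → (∀ W ∈ t, x.1 ≤ W ∨ W ≤ x.1) →
      IsFlagFace F d S (insert x.1 t) := by
    intro t ht x hx hc
    refine ⟨?_, ?_⟩
    · rw [Finset.coe_insert]
      exact ht.1.insert (fun W hW _ => hc W hW)
    · intro W hW
      rcases Finset.mem_insert.1 hW with rfl | hW
      · exact inS x hx
      · exact ht.2 W hW
  have face2 : ∀ x y : compLat F d s, x < y → Module.finrank F x.1 ∈ T →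
      Module.finrank F y.1 ∈ T → IsFlagFace F d S (insert x.1 (insert y.1 s)) := by
    intro x y hxy hx hy
    refine face _ (face _ hs y hy y.2) x hx ?_
    intro W hW
    rcases Finset.mem_insert.1 hW with rfl | hW
    · exact Or.inl hxy.le
    · exact x.2 W hW
  have face3 : ∀ x y z : compLat F d s, x < y → y < z → Module.finrank F x.1 ∈ T →
      Module.finrank F y.1 ∈ T → Module.finrank F z.1 ∈ T →
      IsFlagFace F d S (insert x.1 (insert y.1 (insert z.1 s))) := by
    intro x y z hxy hyz hx hy hz
    refine face _ (face2 y z hyz hy hz) x hx ?_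
    intro W hW
    rcases Finset.mem_insert.1 hW with rfl | hW
    · exact Or.inl hxy.le
    rcases Finset.mem_insert.1 hW with rfl | hW
    · exact Or.inl (hxy.trans hyz).le
    · exact x.2 W hW
  have ne : ∀ x y : compLat F d s, x < y → x.1 ≠ y.1 := fun x y hxy e =>
    hxy.ne (Subtype.ext e)
  have hf : Cocyc (fun x : compLat F d s => Module.finrank F x.1) T
      (fun x y => f x.1 y.1) := by
    have anti : ∀ x y : compLat F d s, x < y → Module.finrank F x.1 ∈ T →
        Module.finrank F y.1 ∈ T → f y.1 x.1 = (f x.1 y.1)⁻¹ := by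
      intro x y hxy hx hy
      rw [hanti x.1 y.1 (ne x y hxy) (notin x hx) (notin y hy) (face2 x y hxy hx hy), inv_inv]
    refine ⟨anti, ?_⟩
    intro x y z hxy hyz hx hy hz
    have h := hcocycle x.1 y.1 z.1 (ne x y hxy) (ne y z hyz) (ne x z (hxy.trans hyz))
      (notin x hx) (notin y hy) (notin z hz) (face3 x y z hxy hyz hx hy hz)
    rw [anti x z (hxy.trans hyz) hx hz, mul_inv_eq_one] at h
    exact h.symm
  obtain ⟨G, hG⟩ := (compLat_rk F d s hs.1).cobound hf hTcard
    (by show Module.finrank F (⊥ : Submodule F (Fin d → F)) = 0; simp)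
    (by
      intro t ht
      show t ≤ Module.finrank F (⊤ : Submodule F (Fin d → F))
      rw [hT, Finset.mem_sdiff] at ht
      have := Finset.mem_Icc.1 (hS ht.1)
      rw [finrank_top, Module.finrank_fin_fun]
      omega)
  refine ⟨fun U => if h : U ∈ compLat F d s then G ⟨U, h⟩ else 1, ?_⟩
  intro U V hne hU hV hface
  have comp : ∀ X, X ∈ insert U (insert V s) → X ∈ compLat F d s := by
    intro X hX W hW
    exact hface.1.total (by exact_mod_cast hX) (by simp [hW])
  have memT : ∀ X, X ∈ insert U (insert V s) → X ∉ s → Module.finrank F X ∈ T := by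
    intro X hX hXs
    rw [hT, Finset.mem_sdiff]
    refine ⟨hface.2 X hX, fun hc => ?_⟩
    obtain ⟨W, hW, e⟩ := Finset.mem_image.1 hc
    apply hXs
    rcases comp X hX W hW with h | h
    · rw [Submodule.eq_of_le_of_finrank_eq h e.symm]; exact hW
    · rw [← Submodule.eq_of_le_of_finrank_eq h e]; exact hW
  have mU : U ∈ insert U (insert V s) := by simp
  have mV : V ∈ insert U (insert V s) := by simp
  have cU := comp U mU
  have cV := comp V mV
  have tU := memT U mU hU
  have tV := memT V mV hV
  simp only [dif_pos cU, dif_pos cV]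
  rcases hface.1.total (x := U) (y := V) (by simp) (by simp) with h | h
  · exact hG ⟨U, cU⟩ ⟨V, cV⟩ (lt_of_le_of_ne h hne : U < V) tU tV
  · rw [hanti U V hne hU hV hface,
      show f V U = _ from hG ⟨V, cV⟩ ⟨U, cU⟩ (lt_of_le_of_ne h hne.symm : V < U) tV tU]
    group
end
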